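/- arXiv:1310.7260 — 2 statements merged into one kernel-verified Lean document; each statement's English description precedes it below -/
import Mathlib

section
/- The laws of W_n := n^{-2} ∑_{1≤i,j≤n} 1_{gcd(X_i,X_j)=1} satisfy a large deviation principle with speed n and rate function I₁: for every Borel set A ⊆ [0,1], −inf_{x∈A°} I₁(x) ≤ liminf_{n→∞} (1/n) log P(W_n ∈ A) ≤ limsup_{n→∞} (1/n) log P(W_n ∈ A) ≤ −inf_{x∈closure(A)} I₁(x), where I₁(x) = inf{ ∫_{[0,1]} log(dμ/dν) dμ : μ a Borel probability measure on [0,1] with ∬_{[0,1]²} f(u,v) μ(du) μ(dv) = x }, the relative entropy being +∞ when μ is not absolutely continuous with respect to ν. -/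
open MeasureTheory ProbabilityTheory Filter Real
open scoped ENNReal

/-- The joint law of `n` i.i.d. random variables, each uniformly distributed on
`{1, 2, …, n}` (the coordinates `ω ↦ ω i` are the random variables `X_i`). -/
noncomputable def unifVec (n : ℕ) : Measure (Fin n → ℕ) :=
  Measure.pi fun _ => uniformOn (Set.Icc 1 n)

/-- `digit i a` is the `(i+1)`-st digit of the binary expansion of `a`
(the finite expansion is selected for dyadic rationals). -/
noncomputable def digit (i : ℕ) (a : ℝ) : ℕ := ⌊a * 2 ^ (i + 1)⌋.toNat % 2

/-- `f(x,y) = 1` if the binary expansions of `x` and `y` never share a digit `1`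
in the same position, and `f(x,y) = 0` otherwise. -/
noncomputable def coprimeKernel (x y : ℝ) : ℝ :=
  Set.indicator {p : ℝ × ℝ | ∀ i : ℕ, ¬(digit i p.1 = 1 ∧ digit i p.2 = 1)}
    (fun _ => (1 : ℝ)) (x, y)

open Classical in
/-- Relative entropy `∫ log(dμ/dν) dμ`, with value `+∞` when `μ` is not
absolutely continuous with respect to `ν` (or when the defining integral is
infinite); for `μ ≪ ν` it is computed as `∫ (g log g − g + 1) dν` with
`g = dμ/dν`, whose integrand is nonnegative. -/
noncomputable def relEntropy {α : Type*} [MeasurableSpace α] (μ ν : Measure α) : EReal :=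
  if μ ≪ ν then
    ((∫⁻ a, ENNReal.ofReal ((μ.rnDeriv ν a).toReal * Real.log (μ.rnDeriv ν a).toReal
        - (μ.rnDeriv ν a).toReal + 1) ∂ν : ℝ≥0∞) : EReal)
  else ⊤

/-- The rate function
`I₁(x) = inf { ∫ log(dμ/dν) dμ : μ prob. measure on [0,1], ∬ f dμ dμ = x }`
(the infimum of the empty set being `+∞`). -/
noncomputable def coprimeRate (ν : Measure ℝ) (x : ℝ) : EReal :=
  ⨅ (μ : Measure ℝ) (_ : IsProbabilityMeasure μ ∧ μ (Set.Icc 0 1) = 1 ∧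
      (∫ a, ∫ b, coprimeKernel a b ∂μ ∂μ) = x), relEntropy μ ν

open Topology InformationTheory

/-!
Both sides only see patterns of events: whether `p_i ∣ m` for an integer `m`, and whether the `i`-th
binary digit of a real number is `1`. Two integers are coprime when no prime divides both of them,
and `f(x, y) = 1` when no digit of both is `1`. By the Chinese remainder theorem the first `k`
divisibilities of a uniform element of `{1, …, n}` converge in law to the first `k` digits under
`ν`, so Sanov's theorem on the finite alphabet of patterns of length `k` gives the large deviations
of the empirical measure of the patterns, and hence of the fraction of pairs without a common prime
among the first `k`.

Truncation at `k` is exponentially harmless because `∑ p_i⁻²` converges. For the empirical measure,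
Hoeffding's decoupling splits the pairs with a large common prime into sums of independent terms
along matchings, which yields exponential bounds of arbitrarily large rate. For a law `μ` of bounded
relative entropy, `μ ⊗ μ` also has bounded entropy relative to `ν ⊗ ν`, so that it gives uniformly
small mass to the pairs with a common large digit. Setwise compactness of entropy balls turns these
approximations into the large deviation principle.
-/

namespace CoprimeLDP

section Variational

variable {α : Type*} [MeasurableSpace α] {μ ν : Measure α}

lemma mul_le_klFun_add_exp_sub_one {g : ℝ} (hg : 0 ≤ g) (t : ℝ) :
    g * t ≤ klFun g + (exp t - 1) := by
  rcases hg.eq_or_lt with rfl | hg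
  · simpa [klFun] using (exp_pos t).le
  · have h := mul_le_mul_of_nonneg_left (add_one_le_exp (t - log g)) hg.le
    rw [exp_sub, exp_log hg, mul_div_cancel₀ _ hg.ne'] at h
    rw [klFun_apply]
    linarith

lemma integrable_of_abs_le [IsFiniteMeasure μ] {φ : α → ℝ} {B : ℝ} (hφ : Measurable φ)
    (hB : ∀ x, |φ x| ≤ B) : Integrable φ μ :=
  .of_bound hφ.aestronglyMeasurable B (.of_forall hB)

lemma integrable_exp_of_abs_le [IsFiniteMeasure μ] {φ : α → ℝ} {B : ℝ} (hφ : Measurable φ)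
    (hB : ∀ x, |φ x| ≤ B) : Integrable (fun x => exp (φ x)) μ :=
  .of_bound hφ.exp.aestronglyMeasurable (exp B) <| .of_forall fun x => by
    rw [norm_eq_abs, abs_of_pos (exp_pos _)]
    exact exp_le_exp.2 ((le_abs_self _).trans (hB x))

/-- The inequality of the Donsker–Varadhan variational formula for `klDiv μ ν ≤ c`: for every
bounded measurable test function `φ`, `∫ φ dμ ≤ c + ∫ (e^φ - 1) dν`. -/
def VariationalBound (μ ν : Measure α) (c : ℝ) : Prop :=
  ∀ φ : α → ℝ, Measurable φ → (∃ B, ∀ x, |φ x| ≤ B) →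
    ∫ x, φ x ∂μ ≤ c + ∫ x, (exp (φ x) - 1) ∂ν

theorem variationalBound_toReal_klDiv [IsFiniteMeasure μ] [IsFiniteMeasure ν]
    (h : klDiv μ ν ≠ ∞) : VariationalBound μ ν (klDiv μ ν).toReal := by
  rintro φ hφ ⟨B, hB⟩
  obtain ⟨hac, hint⟩ := klDiv_ne_top_iff.1 h
  have hkl : Integrable (fun x => klFun (μ.rnDeriv ν x).toReal) ν :=
    (integrable_klFun_rnDeriv_iff hac).2 hint
  have hexp : Integrable (fun x => exp (φ x) - 1) ν :=
    (integrable_exp_of_abs_le hφ hB).sub (integrable_const 1)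
  rw [toReal_klDiv_eq_integral_klFun hac, ← integral_add hkl hexp, ← integral_rnDeriv_smul hac]
  refine integral_mono ?_ (hkl.add hexp) fun x =>
    mul_le_klFun_add_exp_sub_one ENNReal.toReal_nonneg _
  exact (integrable_rnDeriv_smul_iff hac).2 (integrable_of_abs_le hφ hB)

lemma VariationalBound.mul_measureReal_le [IsFiniteMeasure ν] {c : ℝ}
    (h : VariationalBound μ ν c) {s : Set α} (hs : MeasurableSet s) (t : ℝ) :
    t * μ.real s ≤ c + (exp t - 1) * ν.real s := by
  have hexp : ∀ x, exp (s.indicator (fun _ => t) x) - 1 = s.indicator (fun _ => exp t - 1) x := by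
    intro x
    by_cases hx : x ∈ s <;> simp [hx]
  have hbdd : ∀ x, |s.indicator (fun _ => t) x| ≤ |t| := by
    intro x
    by_cases hx : x ∈ s <;> simp [hx]
  have := h (s.indicator fun _ => t) (measurable_const.indicator hs) ⟨|t|, hbdd⟩
  simpa only [hexp, integral_indicator_const _ hs, smul_eq_mul, mul_comm] using this

/-- `g` truncated to the interval `[e⁻ʲ, eʲ]`, so that `log (truncation j g)` is a bounded
test function. -/
noncomputable def truncation (j : ℕ) (g : ℝ) : ℝ := max (exp (-j)) (min (exp j) g)

lemma truncation_pos (j : ℕ) (g : ℝ) : 0 < truncation j g := lt_max_of_lt_left (exp_pos _)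

lemma measurable_truncation (j : ℕ) : Measurable (truncation j) := by
  unfold truncation
  fun_prop

lemma abs_log_truncation_le (j : ℕ) (g : ℝ) : |log (truncation j g)| ≤ j := by
  rw [abs_le]
  constructor
  · rw [le_log_iff_exp_le (truncation_pos j g)]
    exact le_max_left _ _
  · rw [log_le_iff_le_exp (truncation_pos j g)]
    exact max_le (exp_le_exp.2 (by linarith [j.cast_nonneg (α := ℝ)])) (min_le_left _ _)

lemma tendsto_truncation {g : ℝ} (hg : 0 ≤ g) :
    Tendsto (fun j => truncation j g) atTop (𝓝 g) := by
  have hlow : Tendsto (fun j : ℕ => exp (-(j : ℝ))) atTop (𝓝 0) :=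
    tendsto_exp_neg_atTop_nhds_zero.comp tendsto_natCast_atTop_atTop
  have hup : Tendsto (fun j : ℕ => min (exp (j : ℝ)) g) atTop (𝓝 g) := by
    refine tendsto_const_nhds.congr' ?_
    filter_upwards [(tendsto_exp_atTop.comp tendsto_natCast_atTop_atTop).eventually_ge_atTop g]
      with j hj
    exact (min_eq_right hj).symm
  simpa [truncation, hg] using hlow.max hup

lemma klFun_truncation_le (j : ℕ) (g : ℝ) :
    klFun (truncation j g) ≤ g * log (truncation j g) - (truncation j g - 1) := by
  have hdiff : truncation j g * log (truncation j g) ≤ g * log (truncation j g) := by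
    rcases le_total g 1 with hg1 | hg1
    · have hle : g ≤ truncation j g := by
        rw [truncation, min_eq_right (hg1.trans (one_le_exp j.cast_nonneg))]
        exact le_max_right _ _
      refine mul_le_mul_of_nonpos_right hle (log_nonpos (truncation_pos j g).le ?_)
      exact max_le (exp_le_one_iff.2 (by simp)) ((min_le_right _ _).trans hg1)
    · have hmin : 1 ≤ min (exp (j : ℝ)) g := le_min (one_le_exp j.cast_nonneg) hg1
      have heq : truncation j g = min (exp (j : ℝ)) g :=
        max_eq_right ((exp_le_one_iff.2 (by simp)).trans hmin)
      rw [heq]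
      exact mul_le_mul_of_nonneg_right (min_le_right _ _) (log_nonneg hmin)
  rw [klFun_apply]
  linarith

lemma lintegral_klFun_truncation_le [IsFiniteMeasure μ] [IsFiniteMeasure ν] {c : ℝ} (hac : μ ≪ ν)
    (h : VariationalBound μ ν c) (j : ℕ) :
    ∫⁻ x, ENNReal.ofReal (klFun (truncation j (μ.rnDeriv ν x).toReal)) ∂ν ≤ ENNReal.ofReal c := by
  set g : α → ℝ := fun x => (μ.rnDeriv ν x).toReal
  have hgm : Measurable g := (Measure.measurable_rnDeriv μ ν).ennreal_toReal
  set φ : α → ℝ := fun x => log (truncation j (g x)) with hφ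
  have hφm : Measurable φ := ((measurable_truncation j).comp hgm).log
  have hφB : ∀ x, |φ x| ≤ j := fun x => abs_log_truncation_le j (g x)
  have hμ : ∫ x, φ x ∂μ = ∫ x, g x * φ x ∂ν := (integral_rnDeriv_smul hac).symm
  have hint : Integrable (fun x => g x * φ x) ν :=
    (integrable_rnDeriv_smul_iff hac).2 (integrable_of_abs_le hφm hφB)
  have hexp : Integrable (fun x => exp (φ x) - 1) ν :=
    (integrable_exp_of_abs_le hφm hφB).sub (integrable_const 1)
  have hbound : ∀ x, klFun (truncation j (g x)) ≤ g x * φ x - (exp (φ x) - 1) := fun x => by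
    rw [hφ, exp_log (truncation_pos j (g x))]
    exact klFun_truncation_le j (g x)
  have hnonneg : ∀ x, 0 ≤ g x * φ x - (exp (φ x) - 1) := fun x =>
    (klFun_nonneg (truncation_pos j (g x)).le).trans (hbound x)
  calc ∫⁻ x, ENNReal.ofReal (klFun (truncation j (g x))) ∂ν
      ≤ ∫⁻ x, ENNReal.ofReal (g x * φ x - (exp (φ x) - 1)) ∂ν :=
        lintegral_mono fun x => ENNReal.ofReal_le_ofReal (hbound x)
    _ = ENNReal.ofReal (∫ x, φ x ∂μ - ∫ x, (exp (φ x) - 1) ∂ν) := by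
        rw [hμ, ← integral_sub hint hexp]
        exact (ofReal_integral_eq_lintegral_ofReal (hint.sub hexp) (.of_forall hnonneg)).symm
    _ ≤ ENNReal.ofReal c := ENNReal.ofReal_le_ofReal (by linarith [h φ hφm ⟨j, hφB⟩])

theorem VariationalBound.klDiv_le [IsFiniteMeasure μ] [IsFiniteMeasure ν] {c : ℝ}
    (h : VariationalBound μ ν c) :
    klDiv μ ν ≤ ENNReal.ofReal c := by
  have hac : μ ≪ ν := by
    refine .mk fun s hs hνs => ?_
    have hbound : ∀ t, t * μ.real s ≤ c := fun t => by
      simpa [measureReal_def, hνs] using h.mul_measureReal_le hs t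
    rw [← measureReal_eq_zero_iff]
    by_contra hne
    have hlt := hbound ((c + 1) / μ.real s)
    rw [div_mul_cancel₀ _ hne] at hlt
    linarith
  have hlim : ∀ x, Tendsto
      (fun j => ENNReal.ofReal (klFun (truncation j (μ.rnDeriv ν x).toReal))) atTop
      (𝓝 (ENNReal.ofReal (klFun (μ.rnDeriv ν x).toReal))) := fun x =>
    ENNReal.tendsto_ofReal <|
      (continuous_klFun.tendsto _).comp (tendsto_truncation ENNReal.toReal_nonneg)
  rw [klDiv_eq_lintegral_klFun_of_ac hac, lintegral_congr fun x => (hlim x).liminf_eq.symm]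
  refine (lintegral_liminf_le fun j => ?_).trans (liminf_le_of_le (by isBoundedDefault) ?_)
  · exact (measurable_klFun.comp ((measurable_truncation j).comp
      (Measure.measurable_rnDeriv μ ν).ennreal_toReal)).ennreal_ofReal
  · intro b hb
    obtain ⟨j, hj⟩ := hb.exists
    exact hj.trans (lintegral_klFun_truncation_le hac h j)

theorem VariationalBound.of_klDiv_le [IsFiniteMeasure μ] [IsFiniteMeasure ν] {c : ℝ} (hc : 0 ≤ c)
    (h : klDiv μ ν ≤ ENNReal.ofReal c) : VariationalBound μ ν c := fun φ hφ hB =>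
  (variationalBound_toReal_klDiv (ne_top_of_le_ne_top ENNReal.ofReal_ne_top h) φ hφ hB).trans <| by
    gcongr
    exact ENNReal.toReal_le_of_le_ofReal hc h

theorem exists_measureReal_le_of_klDiv_le [IsFiniteMeasure ν] {c ε : ℝ} (hc : 0 ≤ c) (hε : 0 < ε) :
    ∃ δ > 0, ∀ (μ : Measure α) [IsFiniteMeasure μ], klDiv μ ν ≤ ENNReal.ofReal c →
      ∀ s, MeasurableSet s → ν.real s ≤ δ → μ.real s ≤ ε := by
  set t : ℝ := (c + 1) / ε with ht
  have ht0 : 0 < t := by positivity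
  have hexp : 0 < exp t - 1 := by linarith [add_one_lt_exp ht0.ne']
  refine ⟨1 / (exp t - 1), by positivity, fun μ _ hμ s hs hνs => ?_⟩
  have hkey := (VariationalBound.of_klDiv_le hc hμ).mul_measureReal_le hs t
  have hsmall : (exp t - 1) * ν.real s ≤ 1 := by
    rwa [le_div_iff₀ hexp, mul_comm] at hνs
  have htε : t * ε = c + 1 := by rw [ht, div_mul_cancel₀ _ hε.ne']
  exact le_of_mul_le_mul_left (by linarith) ht0

end Variational

section SetwiseCompactness

variable {α ι : Type*} [MeasurableSpace α] {μ ν : Measure α} {c : ℝ}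

lemma VariationalBound.of_simpleFunc [IsFiniteMeasure μ] [IsFiniteMeasure ν]
    (h : ∀ φ : SimpleFunc α ℝ, ∫ x, φ x ∂μ ≤ c + ∫ x, (exp (φ x) - 1) ∂ν) :
    VariationalBound μ ν c := by
  rintro φ hφ ⟨B, hB⟩
  let s : ℕ → SimpleFunc α ℝ := SimpleFunc.approxOn φ hφ Set.univ 0 trivial
  have hsB : ∀ n x, |s n x| ≤ B + B := fun n x =>
    (SimpleFunc.norm_approxOn_zero_le hφ (s := Set.univ) trivial x n).trans
      (add_le_add (hB x) (hB x))
  have hlim : ∀ x, Tendsto (fun n => s n x) atTop (𝓝 (φ x)) := fun x =>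
    SimpleFunc.tendsto_approxOn hφ (Set.mem_univ _) (by simp)
  have hleft : Tendsto (fun n => ∫ x, s n x ∂μ) atTop (𝓝 (∫ x, φ x ∂μ)) :=
    tendsto_integral_of_dominated_convergence (fun _ => B + B)
      (fun n => (s n).measurable.aestronglyMeasurable) (integrable_const _)
      (fun n => .of_forall (hsB n)) (.of_forall hlim)
  have hright : Tendsto (fun n => ∫ x, (exp (s n x) - 1) ∂ν) atTop
      (𝓝 (∫ x, (exp (φ x) - 1) ∂ν)) := by
    refine tendsto_integral_of_dominated_convergence (fun _ => exp (B + B) + 1)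
      (fun n => ((s n).measurable.exp.sub_const 1).aestronglyMeasurable) (integrable_const _)
      (fun n => .of_forall fun x => ?_)
      (.of_forall fun x => ((continuous_exp.tendsto _).comp (hlim x)).sub_const 1)
    refine (abs_sub _ _).trans ?_
    rw [abs_of_pos (exp_pos _), abs_one]
    gcongr
    exact (le_abs_self _).trans (hsB n x)
  exact le_of_tendsto_of_tendsto' hleft (hright.const_add c) fun n => h (s n)

theorem VariationalBound.of_tendsto {l : Filter ι} [l.NeBot] {m : ι → Measure α}
    [∀ i, IsFiniteMeasure (m i)] [IsFiniteMeasure μ] [IsFiniteMeasure ν]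
    (hm : ∀ i, VariationalBound (m i) ν c)
    (hlim : ∀ s, MeasurableSet s → Tendsto (fun i => (m i).real s) l (𝓝 (μ.real s))) :
    VariationalBound μ ν c := by
  refine .of_simpleFunc fun φ => ?_
  have hint : ∀ (ρ : Measure α) [IsFiniteMeasure ρ],
      ∫ x, φ x ∂ρ = ∑ y ∈ φ.range, ρ.real (φ ⁻¹' {y}) • y := fun ρ _ =>
    φ.integral_eq_sum (SimpleFunc.integrable_of_isFiniteMeasure φ)
  have hφlim : Tendsto (fun i => ∫ x, φ x ∂(m i)) l (𝓝 (∫ x, φ x ∂μ)) := by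
    simp_rw [hint]
    exact tendsto_finsetSum _ fun y _ => (hlim _ (φ.measurableSet_preimage _)).smul_const y
  exact le_of_tendsto' hφlim fun i => hm i φ φ.measurable φ.exists_forall_norm_le

lemma isSetRing_measurableSet : IsSetRing {s : Set α | MeasurableSet s} where
  empty_mem := .empty
  union_mem _ _ := .union
  sdiff_mem _ _ := .diff

lemma exists_measure_of_absolutelyContinuous [IsFiniteMeasure ν] (L : Set α → ℝ≥0∞)
    (hempty : L ∅ = 0)
    (hunion : ∀ {s t}, MeasurableSet s → MeasurableSet t → Disjoint s t → L (s ∪ t) = L s + L t)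
    (hfin : ∀ s, MeasurableSet s → L s ≠ ∞)
    (hac : ∀ ε > 0, ∃ δ > 0, ∀ s, MeasurableSet s → ν.real s ≤ δ → L s ≤ ε) :
    ∃ μ : Measure α, ∀ s, MeasurableSet s → μ s = L s := by
  let content : AddContent ℝ≥0∞ {s : Set α | MeasurableSet s} :=
    isSetRing_measurableSet.addContent_of_union L hempty hunion
  have hcont : ∀ ⦃s : ℕ → Set α⦄, (∀ n, MeasurableSet (s n)) → Antitone s → ⋂ n, s n = ∅ →
      Tendsto (fun n => L (s n)) atTop (𝓝 0) := by
    intro s hs hanti hinter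
    refine ENNReal.tendsto_nhds_zero.2 fun ε hε => ?_
    obtain ⟨δ, hδ, hL⟩ := hac ε hε
    have hν : Tendsto (fun n => ν.real (s n)) atTop (𝓝 0) := by
      have h := tendsto_measure_iInter_atTop (μ := ν) (fun n => (hs n).nullMeasurableSet) hanti
        ⟨0, measure_ne_top _ _⟩
      rw [hinter, measure_empty] at h
      exact (ENNReal.tendsto_toReal ENNReal.zero_ne_top).comp h
    filter_upwards [hν.eventually_le_const hδ] with n hn using hL _ (hs n) hn
  refine ⟨.ofMeasurable (fun s _ => L s) hempty fun f hf hdisj => ?_, fun s hs =>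
    Measure.ofMeasurable_apply s hs⟩
  exact addContent_iUnion_eq_sum_of_tendsto_zero isSetRing_measurableSet content hfin hcont hf
    (MeasurableSet.iUnion hf) hdisj

theorem exists_tendsto_of_klDiv_le [IsFiniteMeasure ν] (hc : 0 ≤ c) (U : Ultrafilter ι)
    (m : ι → Measure α) [∀ i, IsProbabilityMeasure (m i)]
    (hm : ∀ i, klDiv (m i) ν ≤ ENNReal.ofReal c) :
    ∃ μ : Measure α, IsProbabilityMeasure μ ∧ klDiv μ ν ≤ ENNReal.ofReal c ∧
      ∀ s, MeasurableSet s → Tendsto (fun i => (m i).real s) U (𝓝 (μ.real s)) := by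
  let L : Set α → ℝ≥0∞ := fun s => (U.map fun i => m i s).lim
  have hL : ∀ s, Tendsto (fun i => m i s) U (𝓝 (L s)) := fun s =>
    (U.map fun i => m i s).le_nhds_lim
  have hLle : ∀ s, L s ≤ 1 := fun s => le_of_tendsto' (hL s) fun i => prob_le_one
  have hac : ∀ ε > 0, ∃ δ > 0, ∀ s, MeasurableSet s → ν.real s ≤ δ → L s ≤ ε := by
    intro ε hε
    obtain ⟨r, -, hrε⟩ := ENNReal.lt_iff_exists_real_btwn.1 hε
    have hr0 : 0 < r := ENNReal.ofReal_pos.1 hrε.1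
    obtain ⟨δ, hδ, hδr⟩ := exists_measureReal_le_of_klDiv_le (ν := ν) hc hr0
    refine ⟨δ, hδ, fun s hs hνs => le_of_tendsto' (hL s) fun i => ?_⟩
    rw [← ofReal_measureReal]
    exact (ENNReal.ofReal_le_ofReal (hδr (m i) (hm i) s hs hνs)).trans hrε.2.le
  obtain ⟨μ, hμ⟩ := exists_measure_of_absolutelyContinuous (ν := ν) L
    (tendsto_nhds_unique (hL ∅) (by simp))
    (fun {s t} _ ht hst => tendsto_nhds_unique (hL _) <| by
      simpa only [measure_union hst ht] using (hL s).add (hL t))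
    (fun s _ => ne_top_of_le_ne_top ENNReal.one_ne_top (hLle s)) hac
  have hprob : IsProbabilityMeasure μ :=
    ⟨by rw [hμ _ .univ]; exact tendsto_nhds_unique (hL _) (by simp)⟩
  have hlim : ∀ s, MeasurableSet s → Tendsto (fun i => (m i).real s) U (𝓝 (μ.real s)) :=
    fun s hs => (ENNReal.tendsto_toReal (measure_ne_top μ s)).comp (hμ s hs ▸ hL s)
  exact ⟨μ, hprob, VariationalBound.klDiv_le <|
    .of_tendsto (fun i => .of_klDiv_le hc (hm i)) hlim, hlim⟩

end SetwiseCompactness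

section KlDiv

variable {α β : Type*} [MeasurableSpace α] [MeasurableSpace β]

lemma relEntropy_eq_klDiv (μ ν : Measure α) [IsFiniteMeasure μ] [IsFiniteMeasure ν] :
    relEntropy μ ν = klDiv μ ν := by
  unfold relEntropy
  split_ifs with hac
  · rw [klDiv_eq_lintegral_klFun_of_ac hac]
    simp only [klFun_apply, sub_add_eq_add_sub]
  · rw [klDiv_of_not_ac hac, EReal.coe_ennreal_top]

lemma klDiv_prod_le (μ₁ ν₁ : Measure α) (μ₂ ν₂ : Measure β) [IsProbabilityMeasure μ₁]
    [IsFiniteMeasure ν₁] [IsProbabilityMeasure μ₂] [IsProbabilityMeasure ν₂] :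
    klDiv (μ₁.prod μ₂) (ν₁.prod ν₂) ≤ klDiv μ₁ ν₁ + klDiv μ₂ ν₂ := by
  have hchain := klDiv_compProd_eq_add μ₁ ν₁ (Kernel.const α μ₂) (Kernel.const α ν₂)
  have hleft := klDiv_compProd_left μ₂ ν₂ (Kernel.const β μ₁)
  have hswap := klDiv_map_le (μ₂.prod μ₁) (ν₂.prod μ₁) measurable_swap
  simp only [Measure.compProd_const] at hchain hleft
  rw [Measure.prod_swap, Measure.prod_swap, hleft] at hswap
  rw [hchain]
  gcongr

theorem exists_map_eq_klDiv_eq {ν : Measure α} {τ : Measure β} [IsFiniteMeasure ν]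
    [IsProbabilityMeasure τ] {X : α → β} (hX : Measurable X) (hac : τ ≪ ν.map X) :
    ∃ μ : Measure α, IsProbabilityMeasure μ ∧ μ.map X = τ ∧ klDiv μ ν = klDiv τ (ν.map X) := by
  set g := τ.rnDeriv (ν.map X)
  have hgm : Measurable g := Measure.measurable_rnDeriv _ _
  have hmap : (ν.withDensity (g ∘ X)).map X = τ := by
    ext s hs
    rw [Measure.map_apply hX hs, withDensity_apply _ (hX hs), ← Measure.setLIntegral_rnDeriv hac,
      setLIntegral_map hs hgm hX]
    rfl
  have hprob : IsProbabilityMeasure (ν.withDensity (g ∘ X)) := by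
    have : IsProbabilityMeasure ((ν.withDensity (g ∘ X)).map X) := hmap ▸ inferInstance
    exact Measure.isProbabilityMeasure_of_map X
  refine ⟨ν.withDensity (g ∘ X), hprob, hmap, ?_⟩
  rw [klDiv_eq_lintegral_klFun_of_ac (withDensity_absolutelyContinuous _ _),
    klDiv_eq_lintegral_klFun_of_ac hac,
    lintegral_map (by fun_prop) hX]
  refine lintegral_congr_ae ?_
  filter_upwards [Measure.rnDeriv_withDensity ν (hgm.comp hX)] with x hx
  rw [hx, Function.comp_apply]

end KlDiv

section FiniteAlphabet

lemma absolutelyContinuous_of_measureReal_singleton_pos {S : Type*} [MeasurableSpace S]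
    {τ w : Measure S} (hw : ∀ s, 0 < w.real {s}) : τ ≪ w := by
  refine .mk fun A _ hA => ?_
  have hempty : A = ∅ := Set.eq_empty_of_forall_notMem fun s hs =>
    (hw s).ne' <| by simp [measureReal_def, measure_mono_null (Set.singleton_subset_iff.2 hs) hA]
  rw [hempty, measure_empty]

variable {S : Type*} [Fintype S] [MeasurableSpace S] [MeasurableSingletonClass S]

theorem toReal_klDiv_eq_sum (τ w : Measure S) [IsProbabilityMeasure τ] [IsProbabilityMeasure w]
    (hw : ∀ s, 0 < w.real {s}) :
    (klDiv τ w).toReal = ∑ s, τ.real {s} * log (τ.real {s} / w.real {s}) := by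
  have hac : τ ≪ w := absolutelyContinuous_of_measureReal_singleton_pos hw
  rw [toReal_klDiv_of_measure_eq hac (by simp), integral_fintype .of_finite]
  refine Finset.sum_congr rfl fun s _ => ?_
  have hrn : τ.rnDeriv w s * w {s} = τ {s} := by
    rw [← Measure.setLIntegral_rnDeriv hac, lintegral_singleton]
  have hreal : τ.real {s} = (τ.rnDeriv w s).toReal * w.real {s} := by
    rw [measureReal_def, ← hrn, ENNReal.toReal_mul, measureReal_def]
  rw [smul_eq_mul, llr, hreal, mul_div_cancel_right₀ _ (hw s).ne']

end FiniteAlphabet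

section EmpiricalMeasure

variable {α β : Type*} [MeasurableSpace α] [MeasurableSpace β] {n : ℕ}

/-- The empirical measure `n⁻¹ ∑ i, δ_{x i}` of a sample `x` of size `n`, written as the
pushforward under `x` of the uniform law on the indices; it is `0` for `n = 0`. -/
noncomputable def empiricalMeasure (x : Fin n → α) : Measure α := (uniformOn Set.univ).map x

lemma isProbabilityMeasure_empiricalMeasure (hn : n ≠ 0) (x : Fin n → α) :
    IsProbabilityMeasure (empiricalMeasure x) := by
  have : NeZero n := ⟨hn⟩
  have := isProbabilityMeasure_uniformOn (Set.finite_univ (α := Fin n)) Set.univ_nonempty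
  exact Measure.isProbabilityMeasure_map (measurable_of_finite x).aemeasurable

instance (x : Fin n → α) : IsFiniteMeasure (empiricalMeasure x) := by
  unfold empiricalMeasure
  infer_instance

lemma empiricalMeasure_comp {f : α → β} (hf : Measurable f) (x : Fin n → α) :
    empiricalMeasure (f ∘ x) = (empiricalMeasure x).map f :=
  (Measure.map_map hf (measurable_of_finite x)).symm

lemma integral_empiricalMeasure {f : α → ℝ} (hf : Measurable f) (x : Fin n → α) :
    ∫ a, f a ∂empiricalMeasure x = (∑ i, f (x i)) / n := by
  rw [empiricalMeasure, integral_map (measurable_of_finite x).aemeasurable hf.aestronglyMeasurable,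
    integral_fintype .of_finite, Finset.sum_div]
  simp [measureReal_def, uniformOn_univ, div_eq_inv_mul]

lemma measureReal_empiricalMeasure {s : Set α} (hs : MeasurableSet s) (x : Fin n → α) :
    (empiricalMeasure x).real s = (∑ i, s.indicator (fun _ => (1 : ℝ)) (x i)) / n := by
  rw [← integral_empiricalMeasure (measurable_const.indicator hs), integral_indicator_const _ hs,
    smul_eq_mul, mul_one]

theorem pi_le_abs_empiricalMeasure_sub_le (hn : n ≠ 0) (τ : Measure α) [IsProbabilityMeasure τ]
    {s : Set α} (hs : MeasurableSet s) {ε : ℝ} (hε : 0 < ε) :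
    (Measure.pi fun _ : Fin n => τ).real {x | ε ≤ |(empiricalMeasure x).real s - τ.real s|} ≤
      (n * ε ^ 2)⁻¹ := by
  have hn0 : (0 : ℝ) < n := by positivity
  let X : α → ℝ := s.indicator fun _ => 1
  have hX : MemLp X 2 τ := memLp_indicator_const 2 hs 1 (.inr (measure_ne_top _ _))
  have hint : Integrable X τ := hX.integrable (by simp)
  have hmean : ∫ a, X a ∂τ = τ.real s := by simp [X, integral_indicator_const, hs]
  have hvar : Var[X; τ] ≤ 1 := by
    have hmem : ∀ a, X a ∈ Set.Icc 0 1 := fun a => by by_cases ha : a ∈ s <;> simp [X, ha]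
    exact (variance_le_sq_of_bounded (.of_forall hmem) hint.aemeasurable).trans (by norm_num)
  set Y : (Fin n → α) → ℝ := ∑ i, fun x => X (x i) with hY
  have hYapply : ∀ x, Y x = n * (empiricalMeasure x).real s := fun x => by
    rw [measureReal_empiricalMeasure hs, mul_div_cancel₀ _ hn0.ne', hY, Finset.sum_apply]
  have hYmem : MemLp Y 2 (Measure.pi fun _ : Fin n => τ) := memLp_finsetSum' _ fun i _ =>
    hX.comp_measurePreserving (measurePreserving_eval (fun _ : Fin n => τ) i)
  have hYvar : Var[Y; Measure.pi fun _ : Fin n => τ] ≤ n := by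
    rw [hY, variance_sum_pi fun _ => hX]
    simpa using mul_le_mul_of_nonneg_left hvar hn0.le
  have hYmean : ∫ x, Y x ∂(Measure.pi fun _ : Fin n => τ) = n * τ.real s := by
    have hcoord (i : Fin n) : ∫ x, X (x i) ∂(Measure.pi fun _ : Fin n => τ) = τ.real s :=
      (integral_comp_eval (μ := fun _ : Fin n => τ) hint.aestronglyMeasurable).trans hmean
    simp_rw [hY, Finset.sum_apply]
    rw [integral_finsetSum _ fun i _ => integrable_comp_eval (i := i) hint]
    simp [hcoord]
  have hset : {x : Fin n → α | ε ≤ |(empiricalMeasure x).real s - τ.real s|} =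
      {x | n * ε ≤ |Y x - ∫ x, Y x ∂(Measure.pi fun _ : Fin n => τ)|} := by
    ext x
    rw [hYmean]
    simp only [Set.mem_ofPred_eq, hYapply, ← mul_sub, abs_mul, Nat.abs_cast,
      mul_le_mul_iff_right₀ hn0]
  rw [hset]
  refine (ENNReal.toReal_le_of_le_ofReal (div_nonneg (variance_nonneg Y _) (by positivity))
    (meas_ge_le_variance_div_sq hYmem (by positivity))).trans ?_
  calc Var[Y; Measure.pi fun _ : Fin n => τ] / (n * ε) ^ 2 ≤ n / (n * ε) ^ 2 := by gcongr
    _ = (n * ε ^ 2)⁻¹ := by field_simp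

end EmpiricalMeasure

section ChangeOfMeasure

variable {n : ℕ}

lemma measureReal_pi_singleton {α : Type*} [MeasurableSpace α] (Q : Measure α)
    [IsProbabilityMeasure Q] (x : Fin n → α) :
    (Measure.pi fun _ => Q).real {x} = ∏ i, Q.real {x i} := by
  simp [measureReal_def, ENNReal.toReal_prod]

lemma measureReal_empiricalMeasure_self_pos {α : Type*} [MeasurableSpace α]
    [MeasurableSingletonClass α] (x : Fin n → α) (i : Fin n) :
    0 < (empiricalMeasure x).real {x i} := by
  rw [measureReal_empiricalMeasure (measurableSet_singleton _)]
  have hn : 0 < n := i.pos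
  refine div_pos (Finset.sum_pos' (fun j _ => Set.indicator_nonneg (by simp) _)
    ⟨i, Finset.mem_univ i, by simp⟩) (by positivity)

variable {S : Type*} [Fintype S] [MeasurableSpace S] [MeasurableSingletonClass S]

lemma sum_comp_eq_mul_sum_empiricalMeasure (f : S → ℝ) (x : Fin n → S) :
    ∑ i, f (x i) = n * ∑ s, (empiricalMeasure x).real {s} * f s := by
  classical
  rcases eq_or_ne n 0 with rfl | hn
  · simp
  have hn' : (n : ℝ) ≠ 0 := Nat.cast_ne_zero.2 hn
  simp_rw [measureReal_empiricalMeasure (measurableSet_singleton _), Finset.mul_sum,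
    div_mul_eq_mul_div,
    mul_div_cancel₀ _ hn', Finset.sum_mul]
  rw [Finset.sum_comm]
  refine Finset.sum_congr rfl fun i _ => ?_
  simp [Set.indicator_apply]

lemma measureReal_pi_singleton_eq_exp_mul {τ Q : Measure S} [IsProbabilityMeasure τ]
    [IsProbabilityMeasure Q] {x : Fin n → S} (hτ : ∀ i, 0 < τ.real {x i})
    (hQ : ∀ s, 0 < Q.real {s}) :
    (Measure.pi fun _ => τ).real {x} =
      exp (n * ∑ s, (empiricalMeasure x).real {s} * log (τ.real {s} / Q.real {s})) *
        (Measure.pi fun _ => Q).real {x} := by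
  rw [← sum_comp_eq_mul_sum_empiricalMeasure (fun s => log (τ.real {s} / Q.real {s})),
    exp_sum, measureReal_pi_singleton, measureReal_pi_singleton, ← Finset.prod_mul_distrib]
  refine Finset.prod_congr rfl fun i _ => ?_
  rw [exp_log (div_pos (hτ i) (hQ _)), div_mul_cancel₀ _ (hQ _).ne']

lemma measureReal_pi_le_exp_mul {τ Q : Measure S} [IsProbabilityMeasure τ]
    [IsProbabilityMeasure Q] (hQ : ∀ s, 0 < Q.real {s}) {A : Set (Fin n → S)} {b : ℝ}
    (hA : ∀ x ∈ A, ∑ s, (empiricalMeasure x).real {s} * log (τ.real {s} / Q.real {s}) ≤ b) :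
    (Measure.pi fun _ => τ).real A ≤ exp (n * b) * (Measure.pi fun _ => Q).real A := by
  classical
  rw [← Set.coe_toFinset A, ← sum_measureReal_singleton, ← sum_measureReal_singleton,
    Finset.mul_sum]
  refine Finset.sum_le_sum fun x hx => ?_
  by_cases hτ : ∀ i, 0 < τ.real {x i}
  · rw [measureReal_pi_singleton_eq_exp_mul hτ hQ]
    gcongr
    exact hA x (Set.mem_toFinset.1 hx)
  · obtain ⟨i, hi⟩ := not_forall.1 hτ
    rw [measureReal_pi_singleton τ, Finset.prod_eq_zero (Finset.mem_univ i)
      (le_antisymm (not_lt.1 hi) measureReal_nonneg)]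
    positivity

lemma exp_mul_measureReal_pi_le {τ Q : Measure S} [IsProbabilityMeasure τ]
    [IsProbabilityMeasure Q] (hQ : ∀ s, 0 < Q.real {s}) {A : Set (Fin n → S)} {b : ℝ}
    (hτ : ∀ x ∈ A, ∀ i, 0 < τ.real {x i})
    (hA : ∀ x ∈ A, b ≤ ∑ s, (empiricalMeasure x).real {s} * log (τ.real {s} / Q.real {s})) :
    exp (n * b) * (Measure.pi fun _ => Q).real A ≤ (Measure.pi fun _ => τ).real A := by
  classical
  rw [← Set.coe_toFinset A, ← sum_measureReal_singleton, ← sum_measureReal_singleton,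
    Finset.mul_sum]
  refine Finset.sum_le_sum fun x hx => ?_
  rw [Set.mem_toFinset] at hx
  rw [measureReal_pi_singleton_eq_exp_mul (hτ x hx) hQ]
  gcongr
  exact hA x hx

omit [Fintype S] in
/-- The probability in question is at most `1` when `Q` is replaced by `empiricalMeasure x`. -/
lemma measureReal_pi_empiricalMeasure_eq_le [Finite S] {Q : Measure S}
    [IsProbabilityMeasure Q]
    (hQ : ∀ s, 0 < Q.real {s}) (x : Fin n → S) :
    (Measure.pi fun _ => Q).real {y : Fin n → S | empiricalMeasure y = empiricalMeasure x} ≤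
      exp (-(n * (klDiv (empiricalMeasure x) Q).toReal)) := by
  cases nonempty_fintype S
  rcases eq_or_ne n 0 with rfl | hn
  · simp
  have := isProbabilityMeasure_empiricalMeasure hn x
  have h := exp_mul_measureReal_pi_le (τ := empiricalMeasure x) hQ
    (A := {y : Fin n → S | empiricalMeasure y = empiricalMeasure x})
    (fun y hy i => by
      rw [← show empiricalMeasure y = _ from hy]
      exact measureReal_empiricalMeasure_self_pos y i)
    (b := (klDiv (empiricalMeasure x) Q).toReal)
    (fun y hy => by rw [toReal_klDiv_eq_sum _ _ hQ, show empiricalMeasure y = _ from hy])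
  rw [exp_neg, ← one_div, le_div_iff₀' (exp_pos _)]
  exact h.trans measureReal_le_one

lemma measureReal_pi_le_of_le_klDiv {Q : Measure S} [IsProbabilityMeasure Q]
    (hQ : ∀ s, 0 < Q.real {s}) (b : ℝ) :
    (Measure.pi fun _ => Q).real {x : Fin n → S | b ≤ (klDiv (empiricalMeasure x) Q).toReal} ≤
      (n + 1) ^ Fintype.card S * exp (-(n * b)) := by
  classical
  let type : (Fin n → S) → S → Fin (n + 1) := fun x s =>
    ⟨Finset.card {i | x i = s}, Nat.lt_succ_of_le ((Finset.card_le_univ _).trans (by simp))⟩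
  have htype : ∀ x y, type x = type y → empiricalMeasure x = empiricalMeasure y := by
    intro x y hxy
    refine Measure.ext_of_singleton fun s => ?_
    have hcard : Finset.card {i | x i = s} = Finset.card {i | y i = s} :=
      congrArg Fin.val (congrFun hxy s)
    rw [← measureReal_eq_measureReal_iff, measureReal_empiricalMeasure (measurableSet_singleton s),
      measureReal_empiricalMeasure (measurableSet_singleton s)]
    simp [Set.indicator_apply, Finset.sum_boole, hcard]
  set K := {x : Fin n → S | b ≤ (klDiv (empiricalMeasure x) Q).toReal}
  have hcover : K ⊆ ⋃ t, K ∩ type ⁻¹' {t} := fun x hx => Set.mem_iUnion.2 ⟨type x, hx, rfl⟩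
  have hclass : ∀ t, (Measure.pi fun _ => Q).real (K ∩ type ⁻¹' {t}) ≤ exp (-(n * b)) := by
    intro t
    rcases (K ∩ type ⁻¹' {t}).eq_empty_or_nonempty with hempty | ⟨x, hx, hxt⟩
    · rw [hempty, measureReal_empty]
      positivity
    · refine (measureReal_mono fun y hy => htype y x (hy.2.trans hxt.symm)).trans
        ((measureReal_pi_empiricalMeasure_eq_le hQ x).trans ?_)
      gcongr
      exact hx
  calc (Measure.pi fun _ => Q).real K
      ≤ ∑ t : S → Fin (n + 1), (Measure.pi fun _ => Q).real (K ∩ type ⁻¹' {t}) :=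
        (measureReal_mono hcover).trans (measureReal_iUnion_fintype_le _)
    _ ≤ ∑ _t : S → Fin (n + 1), exp (-(n * b)) := Finset.sum_le_sum fun t _ => hclass t
    _ = (n + 1) ^ Fintype.card S * exp (-(n * b)) := by simp

end ChangeOfMeasure

section Sanov

lemma tendsto_log_div_nhds_zero {ι : Type*} {l : Filter ι} {f : ι → ℝ} {a : ℝ}
    (hf : Tendsto f l (𝓝 a)) (ha : a ≠ 0) : Tendsto (fun i => log (f i / a)) l (𝓝 0) := by
  simpa [div_self ha] using (hf.div_const a).log (div_ne_zero ha ha)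

variable {S : Type*} [Finite S] [MeasurableSpace S] [MeasurableSingletonClass S]

lemma tendsto_pi_empiricalMeasure_mem (τ : Measure S) [IsProbabilityMeasure τ]
    {G : Set (S → ℝ)} (hG : G ∈ 𝓝 fun s => τ.real {s}) :
    Tendsto (fun n => (Measure.pi fun _ : Fin n => τ).real
      {x | (fun s => (empiricalMeasure x).real {s}) ∈ G}) atTop (𝓝 1) := by
  cases nonempty_fintype S
  obtain ⟨ε, hε, hball⟩ := Metric.mem_nhds_iff.1 hG
  have hlim : Tendsto (fun n : ℕ => 1 - ∑ _s : S, (n * ε ^ 2)⁻¹) atTop (𝓝 1) := by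
    have hinv : Tendsto (fun n : ℕ => ((n : ℝ) * ε ^ 2)⁻¹) atTop (𝓝 0) :=
      (tendsto_natCast_atTop_atTop.atTop_mul_const (by positivity)).inv_tendsto_atTop
    simpa using (tendsto_finsetSum Finset.univ fun (_ : S) _ => hinv).const_sub 1
  refine tendsto_of_tendsto_of_tendsto_of_le_of_le' hlim tendsto_const_nhds ?_
    (.of_forall fun n => measureReal_le_one)
  filter_upwards [eventually_ne_atTop 0] with n hn
  have hcompl : {x : Fin n → S | (fun s => (empiricalMeasure x).real {s}) ∈ G}ᶜ ⊆
      ⋃ s, {x | ε ≤ |(empiricalMeasure x).real {s} - τ.real {s}|} := by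
    intro x hx
    contrapose! hx
    simp only [Set.mem_iUnion, Set.mem_ofPred_eq, not_exists, not_le] at hx
    exact Set.notMem_compl_iff.2 (hball ((dist_pi_lt_iff hε).2 hx))
  have hle := (measureReal_mono hcompl (μ := Measure.pi fun _ : Fin n => τ)).trans
    ((measureReal_iUnion_fintype_le _).trans (Finset.sum_le_sum fun s _ =>
      pi_le_abs_empiricalMeasure_sub_le hn τ (measurableSet_singleton s) hε))
  rw [probReal_compl_eq_one_sub (Set.toFinite _).measurableSet] at hle
  linarith

lemma toReal_klDiv_le_add (τ : Measure S) [IsProbabilityMeasure τ] {Q w : Measure S}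
    [IsProbabilityMeasure Q] [IsProbabilityMeasure w] (hQ : ∀ s, 0 < Q.real {s})
    (hw : ∀ s, 0 < w.real {s}) {δ : ℝ} (hδ : ∀ s, log (Q.real {s} / w.real {s}) ≤ δ) :
    (klDiv τ w).toReal ≤ (klDiv τ Q).toReal + δ := by
  cases nonempty_fintype S
  have hsum : ∑ s, τ.real {s} = 1 := by
    rw [sum_measureReal_singleton, Finset.coe_univ, probReal_univ]
  calc (klDiv τ w).toReal
      = ∑ s, τ.real {s} * log (τ.real {s} / w.real {s}) := toReal_klDiv_eq_sum τ w hw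
    _ ≤ ∑ s, (τ.real {s} * log (τ.real {s} / Q.real {s}) + τ.real {s} * δ) := by
        refine Finset.sum_le_sum fun s _ => ?_
        rcases (measureReal_nonneg (μ := τ) (s := {s})).eq_or_lt with h0 | h0
        · simp [← h0]
        · rw [← mul_add, ← div_mul_div_cancel₀ (hQ s).ne',
            log_mul (div_pos h0 (hQ s)).ne' (div_pos (hQ s) (hw s)).ne']
          gcongr
          exact hδ s
    _ = (klDiv τ Q).toReal + δ := by
        rw [Finset.sum_add_distrib, ← Finset.sum_mul, hsum, one_mul, toReal_klDiv_eq_sum τ Q hQ]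

lemma eventually_add_one_pow_le_exp_mul (k : ℕ) {δ : ℝ} (hδ : 0 < δ) :
    ∀ᶠ n : ℕ in atTop, ((n : ℝ) + 1) ^ k ≤ exp (δ * n) := by
  have hlittle : (fun n : ℕ => (n : ℝ) ^ k) =o[atTop] fun n : ℕ => exp (δ / 2 * n) :=
    (isLittleO_pow_exp_pos_mul_atTop k (half_pos hδ)).comp_tendsto tendsto_natCast_atTop_atTop
  filter_upwards [(tendsto_add_atTop_nat 1).eventually (hlittle.bound one_pos),
    eventually_ge_atTop 1] with n hn h1
  rw [one_mul, norm_of_nonneg (by positivity), norm_of_nonneg (by positivity)] at hn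
  push_cast at hn
  have h1' : (1 : ℝ) ≤ n := by exact_mod_cast h1
  exact hn.trans (exp_le_exp.2 (by nlinarith))

variable {Q : ℕ → Measure S} {w : Measure S} [IsProbabilityMeasure w]

theorem eventually_pi_le_toReal_klDiv_le (hprob : ∀ᶠ n in atTop, IsProbabilityMeasure (Q n))
    (hQ : ∀ s, Tendsto (fun n => (Q n).real {s}) atTop (𝓝 (w.real {s})))
    (hw : ∀ s, 0 < w.real {s}) (c : ℝ) {δ : ℝ} (hδ : 0 < δ) :
    ∀ᶠ n in atTop, (Measure.pi fun _ : Fin n => Q n).real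
      {x | c ≤ (klDiv (empiricalMeasure x) w).toReal} ≤ exp (-((c - δ) * n)) := by
  cases nonempty_fintype S
  have hpos : ∀ᶠ n in atTop, ∀ s, 0 < (Q n).real {s} :=
    eventually_all.2 fun s => (hQ s).eventually_const_lt (hw s)
  have hlog : ∀ᶠ n in atTop, ∀ s, log ((Q n).real {s} / w.real {s}) < δ / 2 :=
    eventually_all.2 fun s =>
      (tendsto_log_div_nhds_zero (hQ s) (hw s).ne').eventually_lt_const (half_pos hδ)
  filter_upwards [hprob, hpos, hlog, eventually_ne_atTop 0,
    eventually_add_one_pow_le_exp_mul (Fintype.card S) (half_pos hδ)] with n _ hn hlogn h0 hpow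
  have hsub : {x : Fin n → S | c ≤ (klDiv (empiricalMeasure x) w).toReal} ⊆
      {x | c - δ / 2 ≤ (klDiv (empiricalMeasure x) (Q n)).toReal} := by
    intro x (hx : c ≤ _)
    have := isProbabilityMeasure_empiricalMeasure h0 x
    have := toReal_klDiv_le_add (empiricalMeasure x) hn hw fun s => (hlogn s).le
    exact sub_le_iff_le_add.2 (hx.trans this)
  calc (Measure.pi fun _ : Fin n => Q n).real {x | c ≤ (klDiv (empiricalMeasure x) w).toReal}
      ≤ (n + 1) ^ Fintype.card S * exp (-(n * (c - δ / 2))) :=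
        (measureReal_mono hsub).trans (measureReal_pi_le_of_le_klDiv hn _)
    _ ≤ exp (δ / 2 * n) * exp (-(n * (c - δ / 2))) := by gcongr
    _ = exp (-((c - δ) * n)) := by rw [← exp_add]; congr 1; ring

theorem eventually_exp_le_pi_empiricalMeasure_mem
    (hprob : ∀ᶠ n in atTop, IsProbabilityMeasure (Q n))
    (hQ : ∀ s, Tendsto (fun n => (Q n).real {s}) atTop (𝓝 (w.real {s})))
    (hw : ∀ s, 0 < w.real {s}) (τ : Measure S) [IsProbabilityMeasure τ]
    {G : Set (S → ℝ)} (hG : G ∈ 𝓝 fun s => τ.real {s}) {δ : ℝ} (hδ : 0 < δ) :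
    ∀ᶠ n : ℕ in atTop, exp (-(((klDiv τ w).toReal + δ) * n)) ≤
      (Measure.pi fun _ : Fin n => Q n).real
        {x | (fun s => (empiricalMeasure x).real {s}) ∈ G} := by
  cases nonempty_fintype S
  set H := (klDiv τ w).toReal with hH
  let φ : (S → ℝ) × ℕ → ℝ := fun p => ∑ s, p.1 s * log (τ.real {s} / (Q p.2).real {s})
  have hφ : Tendsto φ ((𝓝 fun s => τ.real {s}) ×ˢ atTop) (𝓝 H) := by
    rw [hH, toReal_klDiv_eq_sum τ w hw]
    refine tendsto_finsetSum _ fun s _ => ?_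
    refine (((continuous_apply s).tendsto _).comp tendsto_fst).mul ?_
    rcases eq_or_ne (τ.real {s}) 0 with h0 | h0
    · simp [h0]
    · exact ((tendsto_const_nhds.div (hQ s) (hw s).ne').log
        (div_ne_zero h0 (hw s).ne')).comp tendsto_snd
  obtain ⟨G', hG', N, hN, hsub⟩ := mem_prod_iff.1 (hφ.eventually_lt_const
    (show H < H + δ / 2 by linarith))
  have hpos : ∀ᶠ n in atTop, ∀ s, 0 < (Q n).real {s} :=
    eventually_all.2 fun s => (hQ s).eventually_const_lt (hw s)
  have hexp : Tendsto (fun n : ℕ => exp (-(δ / 2 * n))) atTop (𝓝 0) :=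
    tendsto_exp_neg_atTop_nhds_zero.comp
      (tendsto_natCast_atTop_atTop.const_mul_atTop (half_pos hδ))
  filter_upwards [hprob, hpos, hN, hexp.eventually_lt_const (show (0 : ℝ) < 1 / 2 by norm_num),
    (tendsto_pi_empiricalMeasure_mem τ (inter_mem hG hG')).eventually_const_lt
      (show (1 / 2 : ℝ) < 1 by norm_num)] with n _ hn hnN hexpn hτ
  have hchange := measureReal_pi_le_exp_mul (τ := τ) hn (b := H + δ / 2)
    (A := {x : Fin n → S | (fun s => (empiricalMeasure x).real {s}) ∈ G ∩ G'})
    fun x hx => (hsub (Set.mk_mem_prod hx.2 hnN) : φ (_, n) < _).le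
  calc exp (-((H + δ) * n)) = exp (-(n * (H + δ / 2))) * exp (-(δ / 2 * n)) := by
        rw [← exp_add]; congr 1; ring
    _ ≤ exp (-(n * (H + δ / 2))) * (exp (n * (H + δ / 2)) * (Measure.pi fun _ => Q n).real
          {x : Fin n → S | (fun s => (empiricalMeasure x).real {s}) ∈ G ∩ G'}) := by
        gcongr
        linarith
    _ = (Measure.pi fun _ => Q n).real
          {x : Fin n → S | (fun s => (empiricalMeasure x).real {s}) ∈ G ∩ G'} := by
        rw [← mul_assoc, ← exp_add, neg_add_cancel, exp_zero, one_mul]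
    _ ≤ _ := measureReal_mono fun x hx => hx.1

end Sanov

section Patterns

variable {α : Type*} {E : ℕ → Set α} {k : ℕ}

open Classical in
/-- The pattern of a point: which of the first `k` events `E 0, …, E (k - 1)` contain it. -/
noncomputable def pattern (E : ℕ → Set α) (k : ℕ) (a : α) : Fin k → Bool :=
  fun j => decide (a ∈ E j)

/-- The pairs of points lying together in one of the events `E k, E (k + 1), …`. -/
def collisionSet (E : ℕ → Set α) (k : ℕ) : Set (α × α) := ⋃ i, E (i + k) ×ˢ E (i + k)

/-- The probability that no event of `E` contains both of two independent points of law `μ`. -/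
noncomputable def separation [MeasurableSpace α] (E : ℕ → Set α) (μ : Measure α) : ℝ :=
  (μ.prod μ).real (collisionSet E 0)ᶜ

open Classical in
/-- The probability that two independent random patterns, of probability vector `v`, are disjoint;
written for vectors so that its continuity makes sense. -/
noncomputable def disjointMass (v : (Fin k → Bool) → ℝ) : ℝ :=
  ∑ s, ∑ t, if Disjoint s t then v s * v t else 0

lemma disjoint_pattern_iff {a b : α} :
    Disjoint (pattern E k a) (pattern E k b) ↔ ∀ j < k, ¬(a ∈ E j ∧ b ∈ E j) := by
  have hbool : ∀ x y : Bool, Disjoint x y ↔ ¬(x ∧ y) := by simp [disjoint_iff]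
  simp [Pi.disjoint_iff, pattern, Fin.forall_iff, hbool]

lemma compl_collisionSet_zero_subset :
    (collisionSet E 0)ᶜ ⊆ {p | Disjoint (pattern E k p.1) (pattern E k p.2)} := by
  rintro ⟨a, b⟩ h
  exact disjoint_pattern_iff.2 fun j _ hj => h (Set.mem_iUnion.2 ⟨j, hj⟩)

lemma setOf_disjoint_pattern_subset :
    {p : α × α | Disjoint (pattern E k p.1) (pattern E k p.2)} ⊆
      (collisionSet E 0)ᶜ ∪ collisionSet E k := by
  rintro ⟨a, b⟩ h
  refine or_iff_not_imp_left.2 fun h0 => ?_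
  obtain ⟨i, hi⟩ := Set.mem_iUnion.1 (Set.notMem_compl_iff.1 h0)
  have hki : k ≤ i := not_lt.1 fun hlt => disjoint_pattern_iff.1 h i hlt hi
  exact Set.mem_iUnion.2 ⟨i - k, by rwa [Nat.sub_add_cancel hki]⟩

lemma continuous_disjointMass : Continuous (disjointMass (k := k)) := by
  unfold disjointMass
  refine continuous_finsetSum _ fun s _ => continuous_finsetSum _ fun t _ => ?_
  split_ifs <;> fun_prop

variable [MeasurableSpace α] (hE : ∀ i, MeasurableSet (E i))
include hE

lemma measurable_pattern : Measurable (pattern E k) :=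
  measurable_pi_lambda _ fun j => measurable_to_bool <| by
    simpa [pattern, Set.preimage] using hE j

lemma measurableSet_collisionSet : MeasurableSet (collisionSet E k) :=
  .iUnion fun _ => (hE _).prod (hE _)

variable (μ : Measure α) [IsFiniteMeasure μ]

lemma measure_eq_ofReal_sum_map_pattern (i : ℕ) :
    μ (E i) = .ofReal
      (∑ s with s (Fin.last i) = true, (μ.map (pattern E (i + 1))).real {s}) := by
  have hpre : E i = pattern E (i + 1) ⁻¹' {s | s (Fin.last i) = true} := by
    ext
    simp [pattern]
  rw [sum_measureReal_singleton, Finset.coe_filter_univ,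
    map_measureReal_apply (measurable_pattern hE) (Set.toFinite _).measurableSet, ← hpre,
    ofReal_measureReal]

lemma disjointMass_map_pattern :
    disjointMass (fun s => (μ.map (pattern E k)).real {s}) =
      (μ.prod μ).real {p | Disjoint (pattern E k p.1) (pattern E k p.2)} := by
  classical
  have hX := measurable_pattern hE (k := k)
  have hset : {p : (Fin k → Bool) × (Fin k → Bool) | Disjoint p.1 p.2} =
      (Finset.univ.filter fun p : (Fin k → Bool) × (Fin k → Bool) => Disjoint p.1 p.2) := by
    simp
  have hpre : {p : α × α | Disjoint (pattern E k p.1) (pattern E k p.2)} =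
      Prod.map (pattern E k) (pattern E k) ⁻¹' {p | Disjoint p.1 p.2} := rfl
  rw [hpre, ← map_measureReal_apply (hX.prodMap hX) (Set.toFinite _).measurableSet,
    ← Measure.map_prod_map _ _ hX hX, hset, ← sum_measureReal_singleton, Finset.sum_filter,
    Fintype.sum_prod_type]
  refine Finset.sum_congr rfl fun s _ => Finset.sum_congr rfl fun t _ => ?_
  rw [← Set.singleton_prod_singleton, measureReal_prod_prod]

theorem abs_disjointMass_sub_separation_le :
    |disjointMass (fun s => (μ.map (pattern E k)).real {s}) - separation E μ| ≤
      (μ.prod μ).real (collisionSet E k) := by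
  rw [disjointMass_map_pattern hE, separation, abs_le]
  have hlower := measureReal_mono (μ := μ.prod μ) (compl_collisionSet_zero_subset (E := E) (k := k))
  have hupper := (measureReal_mono (μ := μ.prod μ)
    (setOf_disjoint_pattern_subset (E := E) (k := k))).trans (measureReal_union_le _ _)
  have := measureReal_nonneg (μ := μ.prod μ) (s := collisionSet E k)
  constructor <;> linarith

end Patterns

section SquareSummable

variable {α : Type*} [MeasurableSpace α] {E : ℕ → Set α} {u : ℕ → ℝ≥0∞}

lemma prod_collisionSet_le {μ : Measure α} [SFinite μ] (hu : ∀ i, μ (E i) ≤ u i) (k : ℕ) :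
    (μ.prod μ) (collisionSet E k) ≤ ∑' i, u (i + k) ^ 2 :=
  (measure_iUnion_le _).trans <| ENNReal.tsum_le_tsum fun i => by
    rw [Measure.prod_prod, sq]
    gcongr <;> exact hu _

lemma eventually_forall_prodReal_collisionSet_le (hu : ∑' i, u i ^ 2 ≠ ∞) {ε : ℝ} (hε : 0 < ε) :
    ∀ᶠ k in atTop, ∀ μ : Measure α, [IsFiniteMeasure μ] → (∀ i, μ (E i) ≤ u i) →
      (μ.prod μ).real (collisionSet E k) ≤ ε := by
  filter_upwards [(ENNReal.tendsto_sum_nat_add _ hu).eventually_lt_const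
    (ENNReal.ofReal_pos.2 hε)] with k hk μ _ hμ
  exact ENNReal.toReal_le_of_le_ofReal hε.le ((prod_collisionSet_le hμ k).trans hk.le)

variable {ν : Measure α} [IsProbabilityMeasure ν] {c : ℝ}

/-- Sets of small `ν ⊗ ν` measure have small `μ ⊗ μ` measure uniformly over an entropy ball, because
relative entropy is additive on products. -/
lemma eventually_forall_klDiv_le_prodReal_collisionSet_le (hE : ∀ i, MeasurableSet (E i))
    (hu : ∑' i, u i ^ 2 ≠ ∞) (hν : ∀ i, ν (E i) ≤ u i) (hc : 0 ≤ c) {ε : ℝ} (hε : 0 < ε) :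
    ∀ᶠ k in atTop, ∀ μ : Measure α, [IsProbabilityMeasure μ] → klDiv μ ν ≤ .ofReal c →
      (μ.prod μ).real (collisionSet E k) ≤ ε := by
  obtain ⟨δ, hδ, hsmall⟩ := exists_measureReal_le_of_klDiv_le (ν := ν.prod ν) (add_nonneg hc hc) hε
  filter_upwards [eventually_forall_prodReal_collisionSet_le (E := E) hu hδ] with k hk μ _ hμ
  refine hsmall (μ.prod μ) ?_ _ (measurableSet_collisionSet hE) (hk ν hν)
  rw [ENNReal.ofReal_add hc hc]
  exact (klDiv_prod_le μ ν μ ν).trans (add_le_add hμ hμ)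

lemma separation_mem_Icc (μ : Measure α) [IsProbabilityMeasure μ] :
    separation E μ ∈ Set.Icc 0 1 :=
  ⟨measureReal_nonneg, measureReal_le_one⟩

theorem isCompact_setOf_separation_klDiv_le (hE : ∀ i, MeasurableSet (E i))
    (hu : ∑' i, u i ^ 2 ≠ ∞) (hν : ∀ i, ν (E i) ≤ u i) (hc : 0 ≤ c) :
    IsCompact {x | ∃ μ, IsProbabilityMeasure μ ∧ klDiv μ ν ≤ .ofReal c ∧ separation E μ = x} := by
  refine isCompact_Icc.of_isClosed_subset (isClosed_of_closure_subset fun x hx => ?_)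
    (by rintro _ ⟨μ, _, -, rfl⟩; exact separation_mem_Icc μ)
  obtain ⟨y, hy, hyx⟩ := mem_closure_iff_seq_limit.1 hx
  choose m hm hkl hsep using hy
  obtain ⟨μ, hμ, hμkl, hlim⟩ := exists_tendsto_of_klDiv_le hc (hyperfilter ℕ) m hkl
  refine ⟨μ, hμ, hμkl, eq_of_forall_dist_le fun ε hε => ?_⟩
  obtain ⟨k, hk⟩ := (eventually_forall_klDiv_le_prodReal_collisionSet_le hE hu hν hc
    (half_pos hε)).exists
  let v (ρ : Measure α) (s : Fin k → Bool) : ℝ := (ρ.map (pattern E k)).real {s}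
  have hv : Tendsto (fun n => v (m n)) (hyperfilter ℕ) (𝓝 (v μ)) :=
    tendsto_pi_nhds.2 fun s => by
      simpa only [v, map_measureReal_apply (measurable_pattern hE) (measurableSet_singleton s)]
        using hlim _ (measurable_pattern hE (measurableSet_singleton s))
  have hdiff : Tendsto (fun n => |disjointMass (v (m n)) - y n|) (hyperfilter ℕ)
      (𝓝 |disjointMass (v μ) - x|) :=
    (((continuous_disjointMass.tendsto _).comp hv).sub (hyx.mono_left Nat.hyperfilter_le_atTop)).abs
  have hle : |disjointMass (v μ) - x| ≤ ε / 2 := le_of_tendsto' hdiff fun n => by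
    rw [← hsep n]
    exact (abs_disjointMass_sub_separation_le hE (m n)).trans (hk (m n) (hkl n))
  calc dist (separation E μ) x
      ≤ dist (separation E μ) (disjointMass (v μ)) + dist (disjointMass (v μ)) x :=
        dist_triangle _ _ _
    _ ≤ ε / 2 + ε / 2 := by
        gcongr
        · rw [dist_comm]
          exact (abs_disjointMass_sub_separation_le hE μ).trans (hk μ hμkl)
        · exact hle
    _ = ε := add_halves ε

end SquareSummable

section Matching

lemma mgf_indicator_le {Ω : Type*} [MeasurableSpace Ω] {μ : Measure Ω} [IsProbabilityMeasure μ]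
    {B : Set Ω} (hB : MeasurableSet B) (t : ℝ) :
    mgf (B.indicator fun _ => 1) μ t ≤ exp ((exp t - 1) * μ.real B) := by
  have hexp : ∀ a, exp (t * B.indicator (fun _ => 1) a) =
      B.indicator (fun _ => exp t - 1) a + 1 := by
    intro a
    by_cases ha : a ∈ B <;> simp [ha]
  rw [mgf, integral_congr_ae (.of_forall hexp),
    integral_add ((integrable_const _).indicator hB) (integrable_const _),
    integral_indicator_const _ hB]
  simpa [mul_comm] using add_one_le_exp ((exp t - 1) * μ.real B)

variable {α ι : Type*} [MeasurableSpace α] [Fintype ι] {P : Measure α} [IsProbabilityMeasure P]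

lemma iIndepFun_eval_pi : iIndepFun (fun (i : ι) (ω : ι → α) => ω i) (Measure.pi fun _ => P) :=
  iIndepFun_pi (X := fun _ => id) fun _ => aemeasurable_id

lemma map_pi_prodMk_eval {i j : ι} (hij : i ≠ j) :
    (Measure.pi fun _ : ι => P).map (fun ω => (ω i, ω j)) = P.prod P := by
  rw [(indepFun_iff_map_prod_eq_prod_map_map (measurable_pi_apply i).aemeasurable
      (measurable_pi_apply j).aemeasurable).1 (iIndepFun_eval_pi.indepFun hij),
    (measurePreserving_eval (fun _ => P) i).map_eq, (measurePreserving_eval (fun _ => P) j).map_eq]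

variable {h : α × α → ℝ} {σ : ι → ι} {M : Finset ι}

/-- The condition on `M` makes the pairs `{i, σ i}`, `i ∈ M`, disjoint, so the summands are
independent. -/
theorem mgf_sum_matching (hh : Measurable h) (hσ : Function.Involutive σ)
    (hM : ∀ i ∈ M, σ i ∉ M) (t : ℝ) :
    mgf (∑ i ∈ M, fun ω => h (ω i, ω (σ i))) (Measure.pi fun _ : ι => P) t =
      mgf h (P.prod P) t ^ M.card := by
  classical
  induction M using Finset.induction_on with
  | empty => simp
  | insert i M hi ih =>
    have hdisj : Disjoint {i, σ i} (M ∪ M.image σ) := by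
      simp only [Finset.disjoint_left, Finset.mem_union, Finset.mem_image]
      grind [hσ.eq_iff, Function.Involutive]
    have hindep : IndepFun (fun ω => h (ω i, ω (σ i))) (∑ j ∈ M, fun ω => h (ω j, ω (σ j)))
        (Measure.pi fun _ => P) := by
      have hblocks := ((iIndepFun_eval_pi (P := P)).indepFun_finset _ _ hdisj
        measurable_pi_apply).comp
        (φ := fun g => h (g ⟨i, Finset.mem_insert_self _ _⟩,
          g ⟨σ i, Finset.mem_insert_of_mem (Finset.mem_singleton_self _)⟩))
        (ψ := fun g => ∑ j : M, h (g ⟨j, Finset.mem_union_left _ j.2⟩,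
          g ⟨σ j, Finset.mem_union_right _ (Finset.mem_image_of_mem _ j.2)⟩))
        (by fun_prop) (by fun_prop)
      convert hblocks using 1
      · rfl
      · ext ω
        rw [Finset.sum_apply, ← Finset.sum_coe_sort M]
        rfl
    have hpair : mgf (fun ω => h (ω i, ω (σ i))) (Measure.pi fun _ : ι => P) t =
        mgf h (P.prod P) t := by
      rw [← map_pi_prodMk_eval (show i ≠ σ i by grind), mgf_map (by fun_prop) (by fun_prop)]
      rfl
    rw [Finset.sum_insert hi, hindep.mgf_add (Measurable.aestronglyMeasurable (by fun_prop))
      (Measurable.aestronglyMeasurable (by fun_prop)), hpair,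
      ih fun j hj => by grind, Finset.card_insert_of_notMem hi, pow_succ']

end Matching

section Decoupling

lemma sum_sum_eq_sum_diag_add_sum_matchings {ι : Type*} [Fintype ι] [AddCommGroup ι] [LinearOrder ι]
    (f : ι → ι → ℝ) :
    ∑ i, ∑ j, f i j = ∑ i, f i i +
      ∑ r, (∑ i with i < r - i, f i (r - i) + ∑ i with r - i < i, f i (r - i)) := by
  have hreindex : ∑ i, ∑ j, f i j = ∑ r, ∑ i, f i (r - i) := by
    rw [Finset.sum_comm (f := fun r i => f i (r - i))]
    exact Finset.sum_congr rfl fun i _ => ((Equiv.subRight i).sum_comp (f i)).symm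
  have hdiag : ∑ r, ∑ i with i = r - i, f i (r - i) = ∑ i, f i i := by
    simp_rw [Finset.sum_filter, eq_sub_iff_add_eq]
    rw [Finset.sum_comm]
    simp
  have hsplit (r : ι) : ∑ i, f i (r - i) = ∑ i with i = r - i, f i (r - i) +
      (∑ i with i < r - i, f i (r - i) + ∑ i with r - i < i, f i (r - i)) := by
    simp_rw [Finset.sum_filter, ← Finset.sum_add_distrib]
    refine Finset.sum_congr rfl fun i _ => ?_
    rcases lt_trichotomy i (r - i) with h | h | h
    · simp [h, h.ne, h.not_gt]
    · simp [← h]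
    · simp [h, h.ne', h.not_gt]
  rw [hreindex, Finset.sum_congr rfl fun r _ => hsplit r, Finset.sum_add_distrib, hdiag]

variable {α : Type*} [MeasurableSpace α] {P : Measure α} [IsProbabilityMeasure P]
  {B : Set (α × α)} {n : ℕ}

lemma pi_le_sum_matching_le (hB : MeasurableSet B) {σ : Fin n → Fin n}
    (hσ : Function.Involutive σ) {M : Finset (Fin n)} (hM : ∀ i ∈ M, σ i ∉ M) {t : ℝ} (ht : 0 ≤ t)
    (y : ℝ) :
    (Measure.pi fun _ : Fin n => P).real
      {ω | y ≤ ∑ i ∈ M, B.indicator (fun _ => 1) (ω i, ω (σ i))} ≤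
      exp (-(t * y) + n * ((exp t - 1) * (P.prod P).real B)) := by
  have hh : Measurable (B.indicator fun _ => (1 : ℝ)) := measurable_const.indicator hB
  set X : (Fin n → α) → ℝ := ∑ i ∈ M, fun ω => B.indicator (fun _ => 1) (ω i, ω (σ i)) with hX
  have hX1 (ω : Fin n → α) : |X ω| ≤ M.card := by
    rw [hX, Finset.sum_apply, ← nsmul_one]
    refine (Finset.abs_sum_le_sum_abs _ _).trans (Finset.sum_le_card_nsmul _ _ _ fun i _ => ?_)
    by_cases hi : (ω i, ω (σ i)) ∈ B <;> simp [hi]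
  have hXm : Measurable X := by fun_prop
  have hcard : (M.card : ℝ) ≤ n := by
    exact_mod_cast (Finset.card_le_univ M).trans_eq (Fintype.card_fin n)
  have hrate : 0 ≤ (exp t - 1) * (P.prod P).real B :=
    mul_nonneg (sub_nonneg.2 (one_le_exp ht)) measureReal_nonneg
  calc (Measure.pi fun _ : Fin n => P).real
        {ω | y ≤ ∑ i ∈ M, B.indicator (fun _ => 1) (ω i, ω (σ i))}
      = (Measure.pi fun _ : Fin n => P).real {ω | y ≤ X ω} := by simp [hX]
    _ ≤ exp (-t * y) * mgf X (Measure.pi fun _ : Fin n => P) t :=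
        measure_ge_le_exp_mul_mgf y ht
          (integrable_exp_of_abs_le (B := t * M.card) (hXm.const_mul t) fun ω => by
            rw [abs_mul, abs_of_nonneg ht]; gcongr; exact hX1 ω)
    _ ≤ exp (-t * y) * exp ((exp t - 1) * (P.prod P).real B) ^ M.card := by
        rw [hX, mgf_sum_matching hh hσ hM]
        gcongr
        · exact mgf_nonneg
        · exact mgf_indicator_le hB t
    _ ≤ exp (-(t * y) + n * ((exp t - 1) * (P.prod P).real B)) := by
        rw [← exp_nat_mul, ← exp_add, neg_mul]
        gcongr

/-- Hoeffding's decoupling of the double sum along the matchings `i ↔ r - i`. -/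
theorem pi_le_sum_sum_le (hn : n ≠ 0) (hB : MeasurableSet B) {t : ℝ} (ht : 0 ≤ t) (ε : ℝ) :
    (Measure.pi fun _ : Fin n => P).real
      {ω | ε * n ^ 2 ≤ ∑ i, ∑ j, B.indicator (fun _ => 1) (ω i, ω j)} ≤
      2 * n * exp (-(t * ((ε * n - 1) / 2)) + n * ((exp t - 1) * (P.prod P).real B)) := by
  have : NeZero n := ⟨hn⟩
  set b := exp (-(t * ((ε * n - 1) / 2)) + n * ((exp t - 1) * (P.prod P).real B))
  let lower (r : Fin n) : Set (Fin n → α) :=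
    {ω | (ε * n - 1) / 2 ≤ ∑ i with i < r - i, B.indicator (fun _ => 1) (ω i, ω (r - i))}
  let upper (r : Fin n) : Set (Fin n → α) :=
    {ω | (ε * n - 1) / 2 ≤ ∑ i with r - i < i, B.indicator (fun _ => 1) (ω i, ω (r - i))}
  have hcover : {ω : Fin n → α | ε * n ^ 2 ≤ ∑ i, ∑ j, B.indicator (fun _ => (1 : ℝ)) (ω i, ω j)} ⊆
      ⋃ r, lower r ∪ upper r := by
    intro ω hω
    contrapose! hω
    simp only [Set.mem_iUnion, Set.mem_union, lower, upper, Set.mem_ofPred_eq, not_exists, not_or,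
      not_le] at hω ⊢
    have hdiag : ∑ i, B.indicator (fun _ => (1 : ℝ)) (ω i, ω i) ≤ ∑ _i : Fin n, 1 :=
      Finset.sum_le_sum fun i _ => Set.indicator_le_self' (by simp) _
    have hmatch := Finset.sum_lt_sum_of_nonempty (Finset.univ_nonempty (α := Fin n))
      fun r _ => add_lt_add (hω r).1 (hω r).2
    rw [sum_sum_eq_sum_diag_add_sum_matchings]
    simp only [add_halves, Finset.sum_const, Finset.card_univ, Fintype.card_fin, nsmul_eq_mul,
      mul_one] at hdiag hmatch
    linarith
  have hinv (r : Fin n) : Function.Involutive fun i => r - i := fun i => sub_sub_cancel r i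
  have hpart (r : Fin n) : (Measure.pi fun _ : Fin n => P).real (lower r ∪ upper r) ≤ b + b := by
    refine (measureReal_union_le _ _).trans (add_le_add ?_ ?_) <;>
    refine pi_le_sum_matching_le hB (hinv r) (fun i hi => ?_) ht _ <;>
    simp only [Finset.mem_filter_univ, sub_sub_cancel] at hi ⊢ <;>
    exact hi.not_gt
  calc _ ≤ ∑ r, (Measure.pi fun _ : Fin n => P).real (lower r ∪ upper r) :=
        (measureReal_mono hcover).trans (measureReal_iUnion_fintype_le _)
    _ ≤ ∑ _r : Fin n, (b + b) := Finset.sum_le_sum fun r _ => hpart r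
    _ = 2 * n * b := by simp; ring

end Decoupling

section ExponentialTail

variable {α : Type*} [MeasurableSpace α] {n : ℕ}

lemma measureReal_prod_empiricalMeasure {B : Set (α × α)} (hB : MeasurableSet B) (x : Fin n → α) :
    ((empiricalMeasure x).prod (empiricalMeasure x)).real B =
      (∑ i, ∑ j, B.indicator (fun _ => 1) (x i, x j)) / n ^ 2 := by
  have hsection (a : α) : ∫ b, B.indicator (fun _ => (1 : ℝ)) (a, b) ∂empiricalMeasure x =
      (∑ j, B.indicator (fun _ => 1) (a, x j)) / n :=
    integral_empiricalMeasure (f := fun b => B.indicator (fun _ => 1) (a, b)) (by fun_prop) x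
  calc _ = ∫ p, B.indicator (fun _ => (1 : ℝ)) p
          ∂(empiricalMeasure x).prod (empiricalMeasure x) := by
        simp [integral_indicator_const _ hB]
    _ = _ := by
        rw [integral_prod _ ((integrable_const _).indicator hB)]
        simp_rw [hsection]
        rw [integral_empiricalMeasure (by fun_prop), ← Finset.sum_div, div_div, sq]

/-- The exponential Chebyshev parameter `t` is taken of order `C / ε`, and `η` so small that the
moment generating function contributes at most `n / 2` to the exponent. -/
theorem exists_eventually_pi_le_prod_empiricalMeasure_le (C : ℝ) {ε : ℝ} (hε : 0 < ε) :
    ∃ η > 0, ∀ᶠ n : ℕ in atTop, ∀ P : Measure α, [IsProbabilityMeasure P] →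
      ∀ B : Set (α × α), MeasurableSet B → (P.prod P).real B ≤ η →
        (Measure.pi fun _ : Fin n => P).real
          {ω | ε ≤ ((empiricalMeasure ω).prod (empiricalMeasure ω)).real B} ≤ exp (-(C * n)) := by
  set t := 2 * (|C| + 2) / ε with ht
  have htpos : 0 < t := by positivity
  have hexp : 0 < exp t - 1 := sub_pos.2 (one_lt_exp_iff.2 htpos)
  have hpoly : ∀ᶠ n : ℕ in atTop, log 2 + t / 2 ≤ n / 2 := by
    filter_upwards [eventually_ge_atTop ⌈2 * (log 2 + t / 2)⌉₊] with n hn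
    linarith [Nat.ceil_le.1 hn]
  refine ⟨1 / (2 * (exp t - 1)), by positivity, ?_⟩
  filter_upwards [hpoly, eventually_add_one_pow_le_exp_mul 1 (one_pos), eventually_ne_atTop 0]
    with n hn hpow hn0 P _ B hB hη
  have hpos : (0 : ℝ) < n := by positivity
  have hrate : (exp t - 1) * (P.prod P).real B ≤ 1 / 2 := by
    calc _ ≤ (exp t - 1) * (1 / (2 * (exp t - 1))) := by gcongr
      _ = 1 / 2 := by field_simp
  have htε : t * (ε * n) = 2 * (|C| + 2) * n := by rw [ht]; field_simp
  calc _ = (Measure.pi fun _ : Fin n => P).real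
        {ω | ε * n ^ 2 ≤ ∑ i, ∑ j, B.indicator (fun _ => 1) (ω i, ω j)} := by
        simp_rw [measureReal_prod_empiricalMeasure hB, le_div_iff₀ (pow_pos hpos 2)]
    _ ≤ 2 * n * exp (-(t * ((ε * n - 1) / 2)) + n * ((exp t - 1) * (P.prod P).real B)) :=
        pi_le_sum_sum_le hn0 hB htpos.le ε
    _ ≤ exp (log 2) * exp (1 * n) * exp (-(t * ((ε * n - 1) / 2)) + n * (1 / 2)) := by
        rw [exp_log two_pos]
        gcongr
        linarith
    _ ≤ exp (-(C * n)) := by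
        rw [← exp_add, ← exp_add, exp_le_exp]
        nlinarith [le_abs_self C]

end ExponentialTail

section LargeDeviations

variable {α β : Type*} [MeasurableSpace α] [MeasurableSpace β] {ν : Measure α} {E : ℕ → Set α}
  {P : ℕ → Measure β} {D : ℕ → Set β} {u : ℕ → ℝ≥0∞}

/-- The events `D` under the laws `P n` converge, pattern by pattern, to the events `E` under `ν`.
The common square summable bound `u` on their probabilities makes the collisions in events of large
index negligible, uniformly in `n`. -/
structure PatternConvergence (P : ℕ → Measure β) (D : ℕ → Set β) (ν : Measure α) (E : ℕ → Set α)
    (u : ℕ → ℝ≥0∞) : Prop where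
  measurableSet : ∀ i, MeasurableSet (D i)
  measurableSet_limit : ∀ i, MeasurableSet (E i)
  isProbabilityMeasure : ∀ᶠ n in atTop, IsProbabilityMeasure (P n)
  tsum_sq_ne_top : ∑' i, u i ^ 2 ≠ ∞
  le : ∀ n i, P n (D i) ≤ u i
  tendsto : ∀ k s, Tendsto (fun n => ((P n).map (pattern D k)).real {s}) atTop
    (𝓝 ((ν.map (pattern E k)).real {s}))
  limit_pos : ∀ k s, 0 < (ν.map (pattern E k)).real {s}

lemma measureReal_pi_map {S : Type*} [MeasurableSpace S] {n : ℕ} {Q : Measure β}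
    [IsProbabilityMeasure Q] {f : β → S} (hf : Measurable f) {T : Set (Fin n → S)}
    (hT : MeasurableSet T) :
    (Measure.pi fun _ : Fin n => Q.map f).real T =
      (Measure.pi fun _ => Q).real {ω | f ∘ ω ∈ T} := by
  have := Measure.isProbabilityMeasure_map (μ := Q) hf.aemeasurable
  rw [← Measure.pi_map_pi (μ := fun _ : Fin n => Q) (f := fun _ => f) fun _ => hf.aemeasurable,
    map_measureReal_apply (by fun_prop) hT]
  rfl

lemma eventually_two_mul_exp_le {c c' : ℝ} (h : c' < c) :
    ∀ᶠ n : ℕ in atTop, 2 * exp (-(c * n)) ≤ exp (-(c' * n)) := by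
  filter_upwards [eventually_add_one_pow_le_exp_mul 1 (sub_pos.2 h), eventually_ge_atTop 1]
    with n hn hn1
  have hn1 : (1 : ℝ) ≤ n := mod_cast hn1
  calc 2 * exp (-(c * n)) ≤ exp ((c - c') * n) * exp (-(c * n)) := by gcongr; linarith
    _ = exp (-(c' * n)) := by rw [← exp_add]; ring_nf

namespace PatternConvergence

variable (hPD : PatternConvergence P D ν E u)
include hPD

lemma eventually_pi_le_prod_collisionSet_le (C : ℝ) {ε : ℝ} (hε : 0 < ε) :
    ∀ᶠ k in atTop, ∀ᶠ n in atTop, (Measure.pi fun _ : Fin n => P n).real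
      {ω | ε ≤ ((empiricalMeasure ω).prod (empiricalMeasure ω)).real (collisionSet D k)} ≤
        exp (-(C * n)) := by
  obtain ⟨η, hη, htail⟩ := exists_eventually_pi_le_prod_empiricalMeasure_le (α := β) C hε
  filter_upwards [eventually_forall_prodReal_collisionSet_le (E := D) hPD.tsum_sq_ne_top hη]
    with k hk
  filter_upwards [htail, hPD.isProbabilityMeasure] with n hn _
  exact hn (P n) _ (measurableSet_collisionSet hPD.measurableSet) (hk (P n) (hPD.le n))

lemma eventually_isProbabilityMeasure_map (k : ℕ) :
    ∀ᶠ n in atTop, IsProbabilityMeasure ((P n).map (pattern D k)) :=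
  hPD.isProbabilityMeasure.mono fun _ _ =>
    Measure.isProbabilityMeasure_map (measurable_pattern hPD.measurableSet).aemeasurable

variable [IsProbabilityMeasure ν]

lemma limit_le (i : ℕ) : ν (E i) ≤ u i := by
  rw [measure_eq_ofReal_sum_map_pattern hPD.measurableSet_limit ν i]
  refine le_of_tendsto (ENNReal.tendsto_ofReal (tendsto_finsetSum _ fun s _ => hPD.tendsto _ s)) ?_
  filter_upwards [hPD.isProbabilityMeasure] with n _
  rw [← measure_eq_ofReal_sum_map_pattern hPD.measurableSet (P n) i]
  exact hPD.le n i

lemma isProbabilityMeasure_map_limit (k : ℕ) : IsProbabilityMeasure (ν.map (pattern E k)) :=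
  Measure.isProbabilityMeasure_map (measurable_pattern hPD.measurableSet_limit).aemeasurable

lemma exists_abs_disjointMass_sub_separation_le {k : ℕ} {c : ℝ} (τ : Measure (Fin k → Bool))
    [IsProbabilityMeasure τ] (hτ : (klDiv τ (ν.map (pattern E k))).toReal ≤ c) :
    ∃ μ : Measure α, IsProbabilityMeasure μ ∧ klDiv μ ν ≤ .ofReal c ∧
      |disjointMass (fun s => τ.real {s}) - separation E μ| ≤
        (μ.prod μ).real (collisionSet E k) := by
  have := hPD.isProbabilityMeasure_map_limit k
  have hac : τ ≪ ν.map (pattern E k) :=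
    absolutelyContinuous_of_measureReal_singleton_pos (hPD.limit_pos k)
  obtain ⟨μ, hμ, rfl, hkl⟩ :=
    exists_map_eq_klDiv_eq (measurable_pattern hPD.measurableSet_limit) hac
  have hfin : klDiv (μ.map (pattern E k)) (ν.map (pattern E k)) ≠ ∞ :=
    klDiv_ne_top hac .of_finite
  refine ⟨μ, hμ, ?_, abs_disjointMass_sub_separation_le hPD.measurableSet_limit μ⟩
  rw [hkl]
  exact (ENNReal.le_ofReal_iff_toReal_le hfin (ENNReal.toReal_nonneg.trans hτ)).2 hτ

lemma eventually_pi_le_klDiv_map_pattern_le (k : ℕ) (c : ℝ) {δ : ℝ} (hδ : 0 < δ) :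
    ∀ᶠ n in atTop, (Measure.pi fun _ : Fin n => P n).real
      {ω | c ≤ (klDiv ((empiricalMeasure ω).map (pattern D k)) (ν.map (pattern E k))).toReal} ≤
        exp (-((c - δ) * n)) := by
  have hX := measurable_pattern hPD.measurableSet (k := k)
  have := hPD.isProbabilityMeasure_map_limit k
  filter_upwards [eventually_pi_le_toReal_klDiv_le (hPD.eventually_isProbabilityMeasure_map k)
    (hPD.tendsto k) (hPD.limit_pos k) c hδ, hPD.isProbabilityMeasure] with n hn _
  rw [measureReal_pi_map hX (Set.toFinite _).measurableSet] at hn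
  simpa only [Set.mem_ofPred_eq, empiricalMeasure_comp hX] using hn

lemma eventually_exp_le_pi_map_pattern_mem {k : ℕ} (τ : Measure (Fin k → Bool))
    [IsProbabilityMeasure τ] {G : Set ((Fin k → Bool) → ℝ)} (hG : G ∈ 𝓝 fun s => τ.real {s})
    {δ : ℝ} (hδ : 0 < δ) :
    ∀ᶠ n : ℕ in atTop, exp (-(((klDiv τ (ν.map (pattern E k))).toReal + δ) * n)) ≤
      (Measure.pi fun _ : Fin n => P n).real
        {ω | (fun s => ((empiricalMeasure ω).map (pattern D k)).real {s}) ∈ G} := by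
  have hX := measurable_pattern hPD.measurableSet (k := k)
  have := hPD.isProbabilityMeasure_map_limit k
  filter_upwards [eventually_exp_le_pi_empiricalMeasure_mem
    (hPD.eventually_isProbabilityMeasure_map k) (hPD.tendsto k) (hPD.limit_pos k) τ hG hδ,
    hPD.isProbabilityMeasure] with n hn _
  rw [measureReal_pi_map hX (Set.toFinite _).measurableSet] at hn
  simpa only [Set.mem_ofPred_eq, empiricalMeasure_comp hX] using hn

theorem eventually_pi_separation_mem_le {A : Set ℝ} {c : ℝ} (hc : 0 ≤ c)
    (hA : ∀ μ : Measure α, IsProbabilityMeasure μ → klDiv μ ν ≤ .ofReal c →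
      separation E μ ∉ closure A) {δ : ℝ} (hδ : 0 < δ) :
    ∀ᶠ n in atTop, (Measure.pi fun _ : Fin n => P n).real
      {ω | separation D (empiricalMeasure ω) ∈ A} ≤ exp (-((c - δ) * n)) := by
  obtain ⟨ε, hε, hsep⟩ := Metric.exists_pos_forall_lt_edist
    (isCompact_setOf_separation_klDiv_le hPD.measurableSet_limit hPD.tsum_sq_ne_top hPD.limit_le hc)
    isClosed_closure (Set.disjoint_left.2 fun x ⟨μ, hμ, hkl, hx⟩ => hx ▸ hA μ hμ hkl)
  have hε2 : (0 : ℝ) < ε / 2 := by positivity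
  obtain ⟨k, hball, htail⟩ := ((eventually_forall_klDiv_le_prodReal_collisionSet_le
    hPD.measurableSet_limit hPD.tsum_sq_ne_top hPD.limit_le hc hε2).and
    (hPD.eventually_pi_le_prod_collisionSet_le c hε2)).exists
  filter_upwards [hPD.eventually_pi_le_klDiv_map_pattern_le k c (half_pos hδ), htail,
    eventually_two_mul_exp_le (show c - δ < c - δ / 2 by linarith), hPD.isProbabilityMeasure,
    eventually_ne_atTop 0] with n hentropy hcoll htwo _ hn
  have hcover : {ω : Fin n → β | separation D (empiricalMeasure ω) ∈ A} ⊆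
      {ω | c ≤ (klDiv ((empiricalMeasure ω).map (pattern D k)) (ν.map (pattern E k))).toReal} ∪
        {ω | ε / 2 ≤ ((empiricalMeasure ω).prod (empiricalMeasure ω)).real (collisionSet D k)} := by
    intro ω hω
    by_contra! hnot
    simp only [Set.mem_union, Set.mem_ofPred_eq, not_or, not_le] at hnot
    have := isProbabilityMeasure_empiricalMeasure hn ω
    have := Measure.isProbabilityMeasure_map (μ := empiricalMeasure ω)
      (measurable_pattern hPD.measurableSet (k := k)).aemeasurable
    obtain ⟨μ, hμ, hkl, hE⟩ := hPD.exists_abs_disjointMass_sub_separation_le _ hnot.1.le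
    have hD := abs_disjointMass_sub_separation_le (k := k) hPD.measurableSet (empiricalMeasure ω)
    have hlt := hsep _ ⟨μ, hμ, hkl, rfl⟩ _ (subset_closure hω)
    rw [edist_nndist, ENNReal.coe_lt_coe, ← NNReal.coe_lt_coe, coe_nndist] at hlt
    exact hlt.not_gt (((dist_triangle_left _ _ _).trans_lt (add_lt_add_of_le_of_lt
      (hE.trans (hball μ hkl)) (hD.trans_lt hnot.2))).trans_eq (add_halves _))
  calc _ ≤ exp (-((c - δ / 2) * n)) + exp (-(c * n)) :=
        (measureReal_mono hcover).trans <|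
          (measureReal_union_le _ _).trans (add_le_add hentropy hcoll)
    _ ≤ exp (-((c - δ / 2) * n)) + exp (-((c - δ / 2) * n)) := by gcongr; linarith
    _ ≤ exp (-((c - δ) * n)) := by rwa [← two_mul]

theorem eventually_exp_le_pi_separation_mem {A : Set ℝ} (μ : Measure α) [IsProbabilityMeasure μ]
    (hμ : klDiv μ ν ≠ ∞) (hA : separation E μ ∈ interior A) {δ : ℝ} (hδ : 0 < δ) :
    ∀ᶠ n : ℕ in atTop, exp (-(((klDiv μ ν).toReal + δ) * n)) ≤
      (Measure.pi fun _ : Fin n => P n).real {ω | separation D (empiricalMeasure ω) ∈ A} := by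
  set H := (klDiv μ ν).toReal
  obtain ⟨ε, hε, hball⟩ := Metric.isOpen_iff.1 isOpen_interior _ hA
  have hε3 : 0 < ε / 3 := by positivity
  obtain ⟨k, hcollE, htail⟩ := ((eventually_forall_klDiv_le_prodReal_collisionSet_le
    hPD.measurableSet_limit hPD.tsum_sq_ne_top hPD.limit_le ENNReal.toReal_nonneg hε3).and
    (hPD.eventually_pi_le_prod_collisionSet_le (H + δ) hε3)).exists
  replace hcollE := hcollE μ (ENNReal.ofReal_toReal hμ).ge
  have hX := measurable_pattern hPD.measurableSet_limit (k := k)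
  have := Measure.isProbabilityMeasure_map (μ := μ) hX.aemeasurable
  have hmap : (klDiv (μ.map (pattern E k)) (ν.map (pattern E k))).toReal ≤ H :=
    ENNReal.toReal_mono hμ (klDiv_map_le μ ν hX)
  set m := disjointMass fun s => (μ.map (pattern E k)).real {s}
  have hG : {v | |disjointMass v - m| < ε / 3} ∈ 𝓝 fun s => (μ.map (pattern E k)).real {s} :=
    continuous_disjointMass.continuousAt.eventually (Metric.ball_mem_nhds _ hε3)
  filter_upwards [hPD.eventually_exp_le_pi_map_pattern_mem _ hG (half_pos hδ), htail,
    eventually_two_mul_exp_le (show H + δ / 2 < H + δ by linarith), hPD.isProbabilityMeasure]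
    with n hsanov hcollD htwo _
  have hcover : {ω : Fin n → β | (fun s => ((empiricalMeasure ω).map (pattern D k)).real {s}) ∈
        {v | |disjointMass v - m| < ε / 3}} ⊆
      {ω | separation D (empiricalMeasure ω) ∈ A} ∪
        {ω | ε / 3 ≤ ((empiricalMeasure ω).prod (empiricalMeasure ω)).real (collisionSet D k)} := by
    intro ω hω
    refine or_iff_not_imp_right.2 fun hsmall => ?_
    change separation D (empiricalMeasure ω) ∈ A
    simp only [Set.mem_ofPred_eq, not_le] at hω hsmall
    have hD := abs_disjointMass_sub_separation_le (k := k) hPD.measurableSet (empiricalMeasure ω)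
    have hE := abs_disjointMass_sub_separation_le (k := k) hPD.measurableSet_limit μ
    refine interior_subset (hball ?_)
    rw [Metric.mem_ball, dist_eq]
    grind
  have hsum := hsanov.trans ((measureReal_mono hcover).trans (measureReal_union_le _ _))
  have hexp : exp (-((H + δ / 2) * n)) ≤
      exp (-(((klDiv (μ.map (pattern E k)) (ν.map (pattern E k))).toReal + δ / 2) * n)) := by
    gcongr
  linarith

end PatternConvergence

end LargeDeviations

section LogScale

variable {p : ℕ → ℝ≥0∞} {c : ℝ}

lemma inv_mul_log_ofReal_exp {n : ℕ} (hn : n ≠ 0) (c : ℝ) :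
    (((n : ℝ)⁻¹ : ℝ) : EReal) * ENNReal.log (.ofReal (exp (-(c * n)))) = -(c : EReal) := by
  rw [ENNReal.log_ofReal_of_pos (exp_pos _), log_exp, ← EReal.coe_mul, ← EReal.coe_neg]
  congr 1
  field_simp

lemma monotone_inv_mul_log (n : ℕ) :
    Monotone fun q : ℝ≥0∞ => (((n : ℝ)⁻¹ : ℝ) : EReal) * ENNReal.log q := fun _ _ h =>
  mul_le_mul_of_nonneg_left (ENNReal.log_monotone h)
    (EReal.coe_nonneg.2 (inv_nonneg.2 n.cast_nonneg))

lemma neg_le_liminf_inv_mul_log (h : ∀ᶠ n : ℕ in atTop, .ofReal (exp (-(c * n))) ≤ p n) :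
    -(c : EReal) ≤ liminf (fun n : ℕ => (((n : ℝ)⁻¹ : ℝ) : EReal) * ENNReal.log (p n)) atTop := by
  refine le_liminf_of_le (by isBoundedDefault) ?_
  filter_upwards [h, eventually_ne_atTop 0] with n hp hn
  exact (inv_mul_log_ofReal_exp hn c).symm.trans_le (monotone_inv_mul_log n hp)

lemma limsup_inv_mul_log_le_neg (h : ∀ᶠ n : ℕ in atTop, p n ≤ .ofReal (exp (-(c * n)))) :
    limsup (fun n : ℕ => (((n : ℝ)⁻¹ : ℝ) : EReal) * ENNReal.log (p n)) atTop ≤ -(c : EReal) := by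
  refine limsup_le_of_le (by isBoundedDefault) ?_
  filter_upwards [h, eventually_ne_atTop 0] with n hp hn
  exact (monotone_inv_mul_log n hp).trans_eq (inv_mul_log_ofReal_exp hn c)

end LogScale

section RateFunction

variable {α β : Type*} [MeasurableSpace α] [MeasurableSpace β] {ν : Measure α}
  [IsProbabilityMeasure ν] {E : ℕ → Set α} {P : ℕ → Measure β} {D : ℕ → Set β} {u : ℕ → ℝ≥0∞}

/-- The rate function of `separation` of an empirical measure: the least entropy relative to `ν` of
a law with separation `x`, as the contraction principle predicts. -/
noncomputable def separationRate (ν : Measure α) (E : ℕ → Set α) (x : ℝ) : EReal :=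
  ⨅ (μ : Measure α) (_ : IsProbabilityMeasure μ ∧ separation E μ = x), (klDiv μ ν : EReal)

theorem PatternConvergence.neg_iInf_separationRate_le_liminf (hPD : PatternConvergence P D ν E u)
    (A : Set ℝ) :
    -(⨅ x ∈ interior A, separationRate ν E x) ≤
      liminf (fun n : ℕ => (((n : ℝ)⁻¹ : ℝ) : EReal) * ENNReal.log
        ((Measure.pi fun _ : Fin n => P n) {ω | separation D (empiricalMeasure ω) ∈ A})) atTop := by
  rw [EReal.neg_le]
  refine le_iInf₂ fun x hx => le_iInf₂ fun μ ⟨hμ, hμx⟩ => ?_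
  refine EReal.le_of_forall_lt_iff_le.1 fun z hz => EReal.neg_le.1 (neg_le_liminf_inv_mul_log ?_)
  have hfin : klDiv μ ν ≠ ∞ := by
    intro h
    simp [h] at hz
  have hlt : (klDiv μ ν).toReal < z := by
    rwa [← EReal.coe_lt_coe_iff, EReal.coe_ennreal_toReal hfin]
  filter_upwards [hPD.eventually_exp_le_pi_separation_mem μ hfin (hμx ▸ hx) (sub_pos.2 hlt),
    hPD.isProbabilityMeasure] with n hn _
  rw [add_sub_cancel] at hn
  exact (ENNReal.ofReal_le_iff_le_toReal (measure_ne_top _ _)).2 hn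

theorem PatternConvergence.limsup_le_neg_iInf_separationRate (hPD : PatternConvergence P D ν E u)
    (A : Set ℝ) :
    limsup (fun n : ℕ => (((n : ℝ)⁻¹ : ℝ) : EReal) * ENNReal.log
        ((Measure.pi fun _ : Fin n => P n) {ω | separation D (empiricalMeasure ω) ∈ A})) atTop ≤
      -(⨅ x ∈ closure A, separationRate ν E x) := by
  rw [EReal.le_neg]
  refine EReal.ge_of_forall_gt_iff_ge.1 fun z hz => EReal.le_neg.1 (limsup_inv_mul_log_le_neg ?_)
  obtain hz0 | hz0 := lt_or_ge z 0
  · filter_upwards [hPD.isProbabilityMeasure] with n _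
    refine prob_le_one.trans (ENNReal.one_le_ofReal.2 (one_le_exp ?_))
    exact neg_nonneg.2 (mul_nonpos_of_nonpos_of_nonneg hz0.le n.cast_nonneg)
  obtain ⟨c, hzc, hc⟩ := EReal.lt_iff_exists_real_btwn.1 hz
  rw [EReal.coe_lt_coe_iff] at hzc
  have hA (μ : Measure α) (hμ : IsProbabilityMeasure μ) (hkl : klDiv μ ν ≤ .ofReal c) :
      separation E μ ∉ closure A := fun hmem => by
    refine hc.not_ge ((iInf₂_le _ hmem).trans ((iInf₂_le μ ⟨hμ, rfl⟩).trans ?_))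
    rw [← max_eq_left (hz0.trans hzc.le), ← EReal.coe_ennreal_ofReal]
    exact EReal.coe_ennreal_le_coe_ennreal_iff.2 hkl
  filter_upwards [hPD.eventually_pi_separation_mem_le (hz0.trans hzc.le) hA (sub_pos.2 hzc),
    hPD.isProbabilityMeasure] with n hn _
  rw [sub_sub_cancel] at hn
  exact (ENNReal.le_ofReal_iff_toReal_le (measure_ne_top _ _) (exp_pos _).le).2 hn

end RateFunction

section BernoulliPatterns

/-- The probability that a Bernoulli variable with success probability `r` takes the value `b`. -/
def bernoulliWeight (r : ℝ) (b : Bool) : ℝ := if b then r else 1 - r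

lemma bernoulliWeight_pos {r : ℝ} (h0 : 0 < r) (h1 : r < 1) (b : Bool) :
    0 < bernoulliWeight r b := by
  cases b <;> simpa [bernoulliWeight]

lemma pattern_preimage_singleton {α : Type*} {E : ℕ → Set α} {k : ℕ} (s : Fin k → Bool) :
    pattern E k ⁻¹' {s} = {a | ∀ j : Fin k, a ∈ E j ↔ s j = true} := by
  ext a
  rw [Set.mem_preimage, Set.mem_singleton_iff, funext_iff]
  exact forall_congr' fun j => by cases s j <;> simp [pattern]

end BernoulliPatterns

section DivisibilityDensity

lemma measureReal_uniformOn_Icc_dvd (n d : ℕ) :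
    (uniformOn (Set.Icc 1 n)).real {m | d ∣ m} = (n / d : ℕ) / n := by
  have hIcc : Set.Icc 1 n = (Finset.Ioc 0 n : Set ℕ) := by
    ext
    simp [Nat.succ_le_iff]
  have hinter : (Finset.Ioc 0 n : Set ℕ) ∩ {m | d ∣ m} = (Finset.Ioc 0 n).filter (d ∣ ·) :=
    (Finset.coe_filter _ _).symm
  rw [measureReal_def, hIcc, ← uniformOn_inter_self (Finset.finite_toSet _), hinter,
    uniformOn_apply_finset, Finset.inter_eq_right.2 (Finset.filter_subset _ _),
    Nat.Ioc_filter_dvd_card_eq_div]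
  simp

lemma uniformOn_Icc_dvd_le (n : ℕ) {d : ℕ} (hd : d ≠ 0) :
    uniformOn (Set.Icc 1 n) {m | d ∣ m} ≤ (d : ℝ≥0∞)⁻¹ := by
  rw [← ofReal_measureReal, measureReal_uniformOn_Icc_dvd, ← ENNReal.ofReal_natCast,
    ← ENNReal.ofReal_inv_of_pos (by positivity)]
  gcongr
  calc ((n / d : ℕ) : ℝ) / n ≤ n / d / n := by gcongr; exact Nat.cast_div_le
    _ ≤ (d : ℝ)⁻¹ := by
      rw [div_right_comm]
      exact (div_le_div_of_nonneg_right (div_self_le_one _) d.cast_nonneg).trans_eq (one_div _)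

lemma tendsto_uniformOn_Icc_dvd (d : ℕ) :
    Tendsto (fun n => (uniformOn (Set.Icc 1 n)).real {m | d ∣ m}) atTop (𝓝 (d : ℝ)⁻¹) := by
  refine ((tendsto_nat_floor_mul_div_atTop (inv_nonneg.2 d.cast_nonneg)).comp
    tendsto_natCast_atTop_atTop).congr fun n => ?_
  rw [measureReal_uniformOn_Icc_dvd, Function.comp_apply, inv_mul_eq_div, Nat.floor_div_eq_div]

variable {ι : Type*} {q : ι → ℕ}

/-- The divisor `d` makes the induction on `I` possible: the pattern on `I ∪ {i}` is expressed
through the patterns on `I` with the divisors `d` and `d * q i`. -/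
theorem tendsto_uniformOn_Icc_dvd_pattern {I : Finset ι}
    (hq : (I : Set ι).Pairwise (Function.onFun Nat.Coprime q)) (s : ι → Bool) {d : ℕ}
    (hd : ∀ i ∈ I, d.Coprime (q i)) :
    Tendsto (fun n => (uniformOn (Set.Icc 1 n)).real
        {m | d ∣ m ∧ ∀ i ∈ I, q i ∣ m ↔ s i = true}) atTop
      (𝓝 ((d : ℝ)⁻¹ * ∏ i ∈ I, bernoulliWeight (q i : ℝ)⁻¹ (s i))) := by
  classical
  induction I using Finset.induction_on generalizing d with
  | empty => simpa using tendsto_uniformOn_Icc_dvd d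
  | insert i I hi ih =>
    rw [Finset.coe_insert, Set.pairwise_insert] at hq
    rw [Finset.forall_mem_insert] at hd
    have hdvd (m : ℕ) : d * q i ∣ m ↔ d ∣ m ∧ q i ∣ m :=
      ⟨fun h => ⟨dvd_of_mul_right_dvd h, dvd_of_mul_left_dvd h⟩,
        fun h => hd.1.mul_dvd_of_dvd_of_dvd h.1 h.2⟩
    have hdivides := ih hq.1 (d := d * q i) fun j hj =>
      (hd.2 j hj).mul_left (hq.2 j hj (by rintro rfl; exact hi hj)).1
    rw [Finset.prod_insert hi]
    cases hs : s i with
    | true =>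
      have hset (m : ℕ) : (d * q i ∣ m ∧ ∀ j ∈ I, q j ∣ m ↔ s j = true) ↔
          d ∣ m ∧ ∀ j ∈ insert i I, q j ∣ m ↔ s j = true := by
        simp only [Finset.forall_mem_insert, hs, hdvd]
        tauto
      simpa only [hset, bernoulliWeight, if_true, Nat.cast_mul, mul_inv, mul_assoc] using hdivides
    | false =>
      have hset (m : ℕ) : (d ∣ m ∧ ∀ j ∈ insert i I, q j ∣ m ↔ s j = true) ↔
          (d ∣ m ∧ ∀ j ∈ I, q j ∣ m ↔ s j = true) ∧
            ¬(d * q i ∣ m ∧ ∀ j ∈ I, q j ∣ m ↔ s j = true) := by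
        simp only [Finset.forall_mem_insert, hs, hdvd]
        tauto
      have hlim : (d : ℝ)⁻¹ * (bernoulliWeight (q i : ℝ)⁻¹ false *
            ∏ j ∈ I, bernoulliWeight (q j : ℝ)⁻¹ (s j)) =
          (d : ℝ)⁻¹ * ∏ j ∈ I, bernoulliWeight (q j : ℝ)⁻¹ (s j) -
            ((d * q i : ℕ) : ℝ)⁻¹ * ∏ j ∈ I, bernoulliWeight (q j : ℝ)⁻¹ (s j) := by
        rw [bernoulliWeight, if_neg Bool.false_ne_true, Nat.cast_mul, mul_inv]
        ring
      rw [hlim]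
      refine ((ih hq.1 hd.2).sub hdivides).congr fun n => ?_
      rw [← measureReal_sdiff (fun m hm => ?_) .of_discrete]
      · simp only [hset]
        rfl
      · exact ⟨((hdvd m).1 hm.1).1, hm.2⟩

end DivisibilityDensity

section Primes

/-- The multiples of the `i`-th prime, counted from `0`: the events behind coprimality. -/
def primeMultiples (i : ℕ) : Set ℕ := {m | Nat.nth Nat.Prime i ∣ m}

lemma mem_collisionSet_primeMultiples_iff {a b : ℕ} :
    (a, b) ∈ collisionSet primeMultiples 0 ↔ ¬a.Coprime b := by
  rw [Nat.Prime.not_coprime_iff_dvd, collisionSet, Set.mem_iUnion]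
  refine ⟨fun ⟨i, hi⟩ => ⟨_, Nat.prime_nth_prime i, hi⟩,
    fun ⟨p, hp, hdvd⟩ => ⟨p.count Nat.Prime, ?_⟩⟩
  simpa [primeMultiples, Nat.nth_count hp] using hdvd

lemma separation_primeMultiples_empiricalMeasure {n : ℕ} (x : Fin n → ℕ) :
    separation primeMultiples (empiricalMeasure x) =
      1 / (n : ℝ) ^ 2 * ∑ i, ∑ j, if Nat.gcd (x i) (x j) = 1 then (1 : ℝ) else 0 := by
  classical
  rw [separation, measureReal_prod_empiricalMeasure .of_discrete, one_div_mul_eq_div]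
  simp only [Set.indicator_apply, Set.mem_compl_iff, mem_collisionSet_primeMultiples_iff, not_not,
    Nat.coprime_iff_gcd_eq_one]

lemma tsum_sq_inv_nth_prime_ne_top :
    ∑' i, ((Nat.nth Nat.Prime i : ℝ≥0∞)⁻¹) ^ 2 ≠ ∞ := by
  have hsum : Summable fun i : ℕ => (((i + 2 : ℕ) : ℝ) ^ 2)⁻¹ :=
    (summable_nat_add_iff 2).2 (summable_nat_pow_inv.2 one_lt_two)
  refine ne_top_of_le_ne_top hsum.tsum_ofReal_ne_top (ENNReal.tsum_le_tsum fun i => ?_)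
  rw [ENNReal.ofReal_inv_of_pos (by positivity), ENNReal.ofReal_pow (by positivity),
    ENNReal.ofReal_natCast, ← ENNReal.inv_pow]
  gcongr
  exact Nat.add_two_le_nth_prime i

lemma inv_nth_prime_mem_Ioo (i : ℕ) : (Nat.nth Nat.Prime i : ℝ)⁻¹ ∈ Set.Ioo 0 1 := by
  have hp := Nat.prime_nth_prime i
  exact ⟨inv_pos.2 (mod_cast hp.pos), inv_lt_one_of_one_lt₀ (mod_cast hp.one_lt)⟩

theorem tendsto_uniformOn_map_pattern_primeMultiples (k : ℕ) (s : Fin k → Bool) :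
    Tendsto (fun n => ((uniformOn (Set.Icc 1 n)).map (pattern primeMultiples k)).real {s}) atTop
      (𝓝 (∏ j : Fin k, bernoulliWeight (Nat.nth Nat.Prime j : ℝ)⁻¹ (s j))) := by
  have hcoprime : ((Finset.univ : Finset (Fin k)) : Set (Fin k)).Pairwise
      (Function.onFun Nat.Coprime fun j => Nat.nth Nat.Prime j) := fun i _ j _ hij =>
    (Nat.coprime_primes (Nat.prime_nth_prime i) (Nat.prime_nth_prime j)).2 fun h =>
      hij (Fin.ext ((Nat.nth_strictMono Nat.infinite_setOfPred_prime).injective h))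
  simpa [map_measureReal_apply (measurable_pattern fun _ => .of_discrete),
    pattern_preimage_singleton, primeMultiples]
    using tendsto_uniformOn_Icc_dvd_pattern hcoprime s (d := 1) fun _ _ => Nat.coprime_one_left _

end Primes

section Digits

/-- The real numbers whose `(i + 1)`-st binary digit is `1`, indexed from `0` as in `digit`. -/
def digitOne (i : ℕ) : Set ℝ := {a | digit i a = 1}

/-- The binary digits of a point of law `ν` are independent, `digit i` being `1` with the
reciprocal of the `i`-th prime as its probability. -/
def HasPrimeDigits (ν : Measure ℝ) : Prop :=
  ∀ (k : ℕ) (b : ℕ → Fin 2), ν {a | ∀ j < k, digit j a = (b j : ℕ)} =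
    ∏ j ∈ Finset.range k, (if b j = 1 then ((Nat.nth Nat.Prime j : ℝ≥0∞))⁻¹
      else 1 - ((Nat.nth Nat.Prime j : ℝ≥0∞))⁻¹)

lemma HasPrimeDigits.isProbabilityMeasure {ν : Measure ℝ} (hν : HasPrimeDigits ν) :
    IsProbabilityMeasure ν :=
  ⟨by simpa using hν 0 0⟩

lemma measurableSet_digitOne (i : ℕ) : MeasurableSet (digitOne i) := by
  have hfloor : Measurable fun a : ℝ => ⌊a * 2 ^ (i + 1)⌋ :=
    Int.measurable_floor.comp (measurable_id.mul_const _)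
  exact measurable_from_top.comp (g := fun z : ℤ => z.toNat % 2) hfloor (measurableSet_singleton 1)

lemma measureReal_map_pattern_digitOne {ν : Measure ℝ} (hν : HasPrimeDigits ν) (k : ℕ)
    (s : Fin k → Bool) : (ν.map (pattern digitOne k)).real {s} =
      ∏ j : Fin k, bernoulliWeight (Nat.nth Nat.Prime j : ℝ)⁻¹ (s j) := by
  let b (j : ℕ) : Fin 2 := if h : j < k then (if s ⟨j, h⟩ then 1 else 0) else 0
  have hdigit (j : Fin k) (a : ℝ) : (a ∈ digitOne j ↔ s j = true) ↔ digit j a = b j := by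
    have hlt : digit j a < 2 := Nat.mod_lt _ two_pos
    cases hs : s j
    · simpa [b, hs, digitOne] using by omega
    · simp [b, hs, digitOne]
  have hweight (j : Fin k) : (if b j = 1 then (Nat.nth Nat.Prime j : ℝ≥0∞)⁻¹
      else 1 - (Nat.nth Nat.Prime j : ℝ≥0∞)⁻¹).toReal =
        bernoulliWeight (Nat.nth Nat.Prime j : ℝ)⁻¹ (s j) := by
    have hp : (1 : ℝ≥0∞) ≤ Nat.nth Nat.Prime j := mod_cast (Nat.prime_nth_prime j).one_le
    cases hs : s j
    · simp [b, hs, bernoulliWeight, ENNReal.toReal_sub_of_le (ENNReal.inv_le_one.2 hp)]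
    · simp [b, hs, bernoulliWeight]
  rw [map_measureReal_apply (measurable_pattern measurableSet_digitOne) (measurableSet_singleton s),
    pattern_preimage_singleton]
  simp only [hdigit, ← hweight, ← ENNReal.toReal_prod, measureReal_def]
  congr 1
  simpa only [Fin.forall_iff, Finset.prod_range] using hν k b

lemma integral_coprimeKernel (μ : Measure ℝ) [IsFiniteMeasure μ] :
    ∫ a, ∫ b, coprimeKernel a b ∂μ ∂μ = separation digitOne μ := by
  have hmeas := (measurableSet_collisionSet measurableSet_digitOne (k := 0)).compl
  have hset : {p : ℝ × ℝ | ∀ i, ¬(digit i p.1 = 1 ∧ digit i p.2 = 1)} =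
      (collisionSet digitOne 0)ᶜ := by
    ext
    simp [collisionSet, digitOne]
  have hint : Integrable ((collisionSet digitOne 0)ᶜ.indicator 1) (μ.prod μ) :=
    (integrable_const (1 : ℝ)).indicator hmeas
  rw [separation, ← integral_indicator_one hmeas, integral_prod _ hint, ← hset]
  rfl

lemma coprimeRate_eq_separationRate {ν : Measure ℝ} [IsProbabilityMeasure ν]
    (hsupp : ν (Set.Icc 0 1) = 1) (x : ℝ) : coprimeRate ν x = separationRate ν digitOne x := by
  unfold coprimeRate separationRate
  refine le_antisymm (le_iInf₂ fun μ ⟨hμ, hμx⟩ => ?_) (le_iInf₂ fun μ ⟨hμ, _, hμx⟩ => ?_)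
  · by_cases hac : μ ≪ ν
    · have hμsupp : μ (Set.Icc 0 1) = 1 :=
        (prob_compl_eq_zero_iff measurableSet_Icc).1
          (hac ((prob_compl_eq_zero_iff measurableSet_Icc).2 hsupp))
      rw [← relEntropy_eq_klDiv]
      exact iInf₂_le μ ⟨hμ, hμsupp, (integral_coprimeKernel μ).trans hμx⟩
    · simp [klDiv_of_not_ac hac]
  · rw [relEntropy_eq_klDiv]
    exact iInf₂_le μ ⟨hμ, (integral_coprimeKernel μ).symm.trans hμx⟩

end Digits

theorem patternConvergence_primeMultiples_digitOne {ν : Measure ℝ} (hν : HasPrimeDigits ν) :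
    PatternConvergence (fun n => uniformOn (Set.Icc 1 n)) primeMultiples ν digitOne
      fun i => (Nat.nth Nat.Prime i : ℝ≥0∞)⁻¹ where
  measurableSet _ := .of_discrete
  measurableSet_limit := measurableSet_digitOne
  isProbabilityMeasure := (eventually_ge_atTop 1).mono fun n hn =>
    isProbabilityMeasure_uniformOn (Set.finite_Icc 1 n) (Set.nonempty_Icc.2 hn)
  tsum_sq_ne_top := tsum_sq_inv_nth_prime_ne_top
  le n i := uniformOn_Icc_dvd_le n (Nat.prime_nth_prime i).ne_zero
  tendsto k s := by
    rw [measureReal_map_pattern_digitOne hν]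
    exact tendsto_uniformOn_map_pattern_primeMultiples k s
  limit_pos k s := by
    rw [measureReal_map_pattern_digitOne hν]
    exact Finset.prod_pos fun j _ =>
      bernoulliWeight_pos (inv_nth_prime_mem_Ioo j).1 (inv_nth_prime_mem_Ioo j).2 (s j)

end CoprimeLDP

open CoprimeLDP in
theorem ldp_coprime_pairs_general (ν : Measure ℝ) (hsupp : ν (Set.Icc 0 1) = 1)
    (hν : HasPrimeDigits ν) (A : Set ℝ) :
    -(⨅ x ∈ interior A, coprimeRate ν x) ≤
        Filter.liminf
          (fun n : ℕ =>
            (((n : ℝ)⁻¹ : ℝ) : EReal) *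
              ENNReal.log
                ((unifVec n) {ω | (1 / (n : ℝ) ^ 2) *
                  (∑ i : Fin n, ∑ j : Fin n,
                    if Nat.gcd (ω i) (ω j) = 1 then (1 : ℝ) else 0) ∈ A}))
          atTop ∧
      Filter.limsup
          (fun n : ℕ =>
            (((n : ℝ)⁻¹ : ℝ) : EReal) *
              ENNReal.log
                ((unifVec n) {ω | (1 / (n : ℝ) ^ 2) *
                  (∑ i : Fin n, ∑ j : Fin n,
                    if Nat.gcd (ω i) (ω j) = 1 then (1 : ℝ) else 0) ∈ A}))
          atTop
        ≤ -(⨅ x ∈ closure A, coprimeRate ν x) := by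
  have := hν.isProbabilityMeasure
  have hconv := patternConvergence_primeMultiples_digitOne hν
  simp only [coprimeRate_eq_separationRate hsupp, ← separation_primeMultiples_empiricalMeasure]
  exact ⟨hconv.neg_iInf_separationRate_le_liminf A, hconv.limsup_le_neg_iInf_separationRate A⟩

/-- Let `ν` be the law on `[0,1]` of `∑_i B_i 2^{-i}` where the
`B_i` are independent Bernoulli`(1/p_i)` digits, `p_i` the `i`-th prime (here `ν`
is pinned down by its cylinder probabilities).  The empirical coprimality
densities `W_n = n⁻² ∑_{1≤i,j≤n} 1_{gcd(X_i,X_j)=1}` satisfy a large deviation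
principle with speed `n` and rate function `I₁ = coprimeRate ν`: for every
Borel `A ⊆ [0,1]`,
`−inf_{x∈A°} I₁(x) ≤ liminf_n (1/n) log P(W_n ∈ A)` and
`limsup_n (1/n) log P(W_n ∈ A) ≤ −inf_{x∈closure A} I₁(x)`
(with `(1/n) log P = −∞` when the probability vanishes). -/
theorem ldp_coprime_pairs (ν : Measure ℝ) (hprob : IsProbabilityMeasure ν)
    (hsupp : ν (Set.Icc 0 1) = 1)
    (hν : ∀ (k : ℕ) (b : ℕ → Fin 2),
      ν {a | ∀ j < k, digit j a = (b j : ℕ)} =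
        ∏ j ∈ Finset.range k,
          (if b j = 1 then ((Nat.nth Nat.Prime j : ℝ≥0∞))⁻¹
            else 1 - ((Nat.nth Nat.Prime j : ℝ≥0∞))⁻¹))
    (A : Set ℝ) (hA : MeasurableSet A) (hA1 : A ⊆ Set.Icc 0 1) :
    -(⨅ x ∈ interior A, coprimeRate ν x) ≤
        Filter.liminf
          (fun n : ℕ =>
            (((n : ℝ)⁻¹ : ℝ) : EReal) *
              ENNReal.log
                ((unifVec n) {ω | (1 / (n : ℝ) ^ 2) *
                  (∑ i : Fin n, ∑ j : Fin n,
                    if Nat.gcd (ω i) (ω j) = 1 then (1 : ℝ) else 0) ∈ A}))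
          atTop ∧
      Filter.limsup
          (fun n : ℕ =>
            (((n : ℝ)⁻¹ : ℝ) : EReal) *
              ENNReal.log
                ((unifVec n) {ω | (1 / (n : ℝ) ^ 2) *
                  (∑ i : Fin n, ∑ j : Fin n,
                    if Nat.gcd (ω i) (ω j) = 1 then (1 : ℝ) else 0) ∈ A}))
          atTop
        ≤ -(⨅ x ∈ closure A, coprimeRate ν x) :=
  ldp_coprime_pairs_general ν hsupp hν A
end

section
/- As n → ∞, the density of triples whose first coordinate is coprime to each of the other two converges to an Euler product: (1/n³)·#{(a,b,c) ∈ {1,…,n}³ : gcd(a,b) = 1 and gcd(a,c) = 1} → ∏_{p prime} (1 − 2/p² + 1/p³). -/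
open Filter Real

/-!
Let `G` be the graph of pairs of coordinates required to be coprime. A point `x` is counted if and
only if, for every prime `p`, the coordinates that do not vanish modulo `p` form a vertex cover of
`G`. By the Chinese remainder theorem the points of the box `{1,…,n}^ι` become equidistributed
modulo any finite set of primes, so finitely many of these conditions have the product of their
local densities as density. The condition at `p` fails only if both ends of some edge vanish modulo
`p`, hence for a proportion `O(1/p²)` of the box, uniformly in `n`; since `∑ 1/p²` converges, the
limit over the finite sets of primes may be exchanged with the limit over `n`.

For triples, `G` is the star with centre `a` and leaves `b`, `c`: a vertex cover contains the centre
or both leaves, so the local density is `(1 - 1/p) + (1/p) (1 - 1/p)² = 1 - 2/p² + 1/p³`.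
-/

section Proportion

open Finset Topology

variable {α β ι κ ν : Type*} {s : Finset α} {P Q : α → Prop}

open Classical in
/-- The proportion of the elements of the finite set `s` that satisfy `P`, with value `0` for empty
`s`. It is the density of `P` when `s` is a box of growing size, and the local density at a prime
when `s` consists of all residue vectors. -/
noncomputable def proportion (s : Finset α) (P : α → Prop) : ℝ :=
  #{a ∈ s | P a} / #s

lemma proportion_eq [DecidablePred P] : proportion s P = #{a ∈ s | P a} / #s := by
  unfold proportion
  congr!

lemma proportion_nonneg (s : Finset α) (P : α → Prop) : 0 ≤ proportion s P := by
  unfold proportion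
  positivity

lemma proportion_mono (h : ∀ a, P a → Q a) : proportion s P ≤ proportion s Q := by
  unfold proportion
  gcongr with a
  exact h a

lemma proportion_or_le (s : Finset α) (P Q : α → Prop) :
    proportion s (fun a ↦ P a ∨ Q a) ≤ proportion s P + proportion s Q := by
  classical
  simp only [proportion_eq, ← add_div, filter_or]
  gcongr
  exact_mod_cast card_union_le _ _

lemma proportion_or_of_disjoint (h : ∀ a, P a → ¬ Q a) :
    proportion s (fun a ↦ P a ∨ Q a) = proportion s P + proportion s Q := by
  classical
  simp only [proportion_eq, ← add_div, filter_or]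
  rw [card_union_of_disjoint (disjoint_filter.2 fun a _ ↦ h a), Nat.cast_add]

lemma proportion_true (hs : s.Nonempty) : proportion s (fun _ ↦ True) = 1 := by
  simp [proportion, hs.ne_empty]

lemma proportion_not (hs : s.Nonempty) (P : α → Prop) :
    proportion s (fun a ↦ ¬ P a) = 1 - proportion s P := by
  rw [eq_sub_iff_add_eq', ← proportion_or_of_disjoint fun _ ↦ not_not_intro]
  simp only [em, proportion_true hs]

lemma proportion_univ_eq [Fintype α] (a : α) :
    proportion univ (fun b ↦ b = a) = 1 / Fintype.card α := by
  classical
  have hfilter : ({b | b = a} : Finset α) = {a} := by ext; simp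
  rw [proportion_eq, hfilter, card_singleton, card_univ, Nat.cast_one]

lemma proportion_exists_le_tsum {P : κ → α → Prop} {C : κ → ℝ} (hC : Summable C)
    (hP : ∀ k, proportion s (P k) ≤ C k) : proportion s (fun a ↦ ∃ k, P k a) ≤ ∑' k, C k := by
  classical
  have hC₀ (k : κ) : 0 ≤ C k := (proportion_nonneg _ _).trans (hP k)
  obtain ⟨T, hT⟩ : ∃ T : Finset κ, {a ∈ s | ∃ k, P k a} ⊆ T.biUnion fun k ↦ {a ∈ s | P k a} := by
    have hex (a : {a ∈ s | ∃ k, P k a}) : ∃ k, P k a := (mem_filter.1 a.2).2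
    choose k hk using hex
    exact ⟨univ.image k, fun a ha ↦ mem_biUnion.2
      ⟨k ⟨a, ha⟩, mem_image_of_mem _ (mem_univ _), mem_filter.2 ⟨(mem_filter.1 ha).1, hk _⟩⟩⟩
  calc proportion s (fun a ↦ ∃ k, P k a)
      ≤ (∑ k ∈ T, #{a ∈ s | P k a} : ℕ) / #s := by
        rw [proportion_eq]
        gcongr
        exact (card_le_card hT).trans card_biUnion_le
    _ = ∑ k ∈ T, proportion s (P k) := by simp only [Nat.cast_sum, sum_div, proportion_eq]
    _ ≤ ∑ k ∈ T, C k := sum_le_sum fun k _ ↦ hP k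
    _ ≤ ∑' k, C k := hC.sum_le_tsum T fun k _ ↦ hC₀ k

lemma proportion_comp_eq_sum [Fintype β] (s : Finset α) (f : α → β) (P : β → Prop)
    [DecidablePred P] :
    proportion s (fun a ↦ P (f a)) = ∑ b with P b, proportion s (fun a ↦ f a = b) := by
  classical
  simp only [proportion_eq, ← sum_div, ← Nat.cast_sum]
  rw [card_eq_sum_card_fiberwise (f := f) (t := {b | P b}) fun a ha ↦ by simp_all]
  congr! 2
  refine sum_congr rfl fun b hb ↦ ?_
  rw [filter_filter]
  congr! 2
  grind

lemma proportion_piFinset [Fintype ι] [DecidableEq ι] {α : ι → Type*} (s : ∀ i, Finset (α i))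
    (P : ∀ i, α i → Prop) :
    proportion (Fintype.piFinset s) (fun x ↦ ∀ i, P i (x i)) = ∏ i, proportion (s i) (P i) := by
  classical
  have hfilter : ({x ∈ Fintype.piFinset s | ∀ i, P i (x i)} : Finset _) =
      Fintype.piFinset fun i ↦ {a ∈ s i | P i a} := by
    ext x
    simp [forall_and]
  simp only [proportion_eq, hfilter, Fintype.card_piFinset, Nat.cast_prod, prod_div_distrib]

lemma proportion_piFinset_forall_mem [Fintype ι] [DecidableEq ι] {α : ι → Type*}
    {s : ∀ i, Finset (α i)} (hs : ∀ i, (s i).Nonempty) (I : Finset ι) (P : ∀ i, α i → Prop) :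
    proportion (Fintype.piFinset s) (fun x ↦ ∀ i ∈ I, P i (x i)) =
      ∏ i ∈ I, proportion (s i) (P i) := by
  rw [proportion_piFinset s fun i a ↦ i ∈ I → P i a, ← prod_subset (subset_univ I)]
  · exact prod_congr rfl fun i hi ↦ by simp only [hi, forall_const]
  · intro i _ hi
    simp only [hi, IsEmpty.forall_iff, proportion_true (hs i)]

section Limits

variable {l : Filter ν} {X : ν → Finset α}

lemma tendsto_proportion_comp [Fintype β] {f : α → β}
    (hf : ∀ b, Tendsto (fun n ↦ proportion (X n) fun a ↦ f a = b) l (𝓝 (1 / Fintype.card β)))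
    (P : β → Prop) :
    Tendsto (fun n ↦ proportion (X n) fun a ↦ P (f a)) l (𝓝 (proportion univ P)) := by
  classical
  have hP : proportion univ P = ∑ b with P b, (1 / Fintype.card β : ℝ) := by
    simp [proportion_eq, div_eq_mul_inv]
  simp only [proportion_comp_eq_sum, hP]
  exact tendsto_finsetSum _ fun b _ ↦ hf b

/-- The limits over `S` and over `n` may be exchanged because the tails of `∑ C k` bound the error
uniformly in `n`. -/
theorem tendsto_proportion_forall {P : κ → α → Prop} {C : κ → ℝ} {L : Finset κ → ℝ} {δ : ℝ}
    (hfin : ∀ S : Finset κ, Tendsto (fun n ↦ proportion (X n) fun a ↦ ∀ k ∈ S, P k a) l (𝓝 (L S)))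
    (hC : Summable C) (hP : ∀ n k, proportion (X n) (fun a ↦ ¬ P k a) ≤ C k)
    (hL : Tendsto L atTop (𝓝 δ)) :
    Tendsto (fun n ↦ proportion (X n) fun a ↦ ∀ k, P k a) l (𝓝 δ) := by
  have hlower (S : Finset κ) (n : ν) :
      proportion (X n) (fun a ↦ ∀ k, P k a) ≤ proportion (X n) fun a ↦ ∀ k ∈ S, P k a :=
    proportion_mono fun a ha k _ ↦ ha k
  have hupper (S : Finset κ) (n : ν) :
      proportion (X n) (fun a ↦ ∀ k ∈ S, P k a) ≤
        proportion (X n) (fun a ↦ ∀ k, P k a) + ∑' k : {k // k ∉ S}, C k := by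
    calc proportion (X n) (fun a ↦ ∀ k ∈ S, P k a)
        ≤ proportion (X n) (fun a ↦ (∀ k, P k a) ∨ ∃ k : {k // k ∉ S}, ¬ P k a) :=
          proportion_mono fun a ha ↦ or_iff_not_imp_left.2 fun h ↦
            have ⟨k, hk⟩ := not_forall.1 h
            ⟨⟨k, fun hkS ↦ hk (ha k hkS)⟩, hk⟩
      _ ≤ _ := proportion_or_le _ _ _
      _ ≤ _ := by
          gcongr
          exact proportion_exists_le_tsum (hC.comp_injective Subtype.val_injective)
            fun k ↦ hP n k
  have hunif : TendstoUniformly (fun (S : Finset κ) n ↦ proportion (X n) fun a ↦ ∀ k ∈ S, P k a)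
      (fun n ↦ proportion (X n) fun a ↦ ∀ k, P k a) atTop := by
    rw [Metric.tendstoUniformly_iff]
    intro ε hε
    filter_upwards [(tendsto_tsum_compl_atTop_zero C).eventually_lt_const hε] with S hS n
    rw [dist_comm, Real.dist_eq, abs_of_nonneg (sub_nonneg.2 (hlower S n))]
    linarith [hupper S n]
  exact hunif.tendsto_of_eventually_tendsto (.of_forall hfin) hL

end Limits

end Proportion

section Residues

open Finset Topology

variable {ι κ : Type*}

lemma abs_card_Icc_filter_natCast_eq_sub_le {m : ℕ} [NeZero m] (r : ZMod m) (n : ℕ) :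
    |(#{x ∈ Icc 1 n | ((x : ℕ) : ZMod m) = r} : ℝ) - n / m| ≤ 1 := by
  have hcard : (#{x ∈ Icc 1 n | ((x : ℕ) : ZMod m) = r} : ℤ) =
      ⌊((n : ℚ) - r.val) / m⌋ - ⌊((0 : ℚ) - r.val) / m⌋ := by
    have h := Nat.Ioc_filter_modEq_card 0 n (NeZero.pos m) r.val
    simp only [← ZMod.natCast_eq_natCast_iff, ZMod.natCast_zmod_val, Nat.cast_zero] at h
    rwa [max_eq_left (sub_nonneg.2 (by gcongr; positivity))] at h
  have hrat : |(#{x ∈ Icc 1 n | ((x : ℕ) : ZMod m) = r} : ℚ) - n / m| ≤ 1 := by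
    rw [← Int.cast_natCast (#_), hcard, abs_le]
    have hsplit : (n : ℚ) / m = (n - r.val) / m - (0 - r.val) / m := by ring
    push_cast
    constructor <;>
    linarith [Int.floor_le (((n : ℚ) - r.val) / m), Int.lt_floor_add_one (((n : ℚ) - r.val) / m),
      Int.floor_le (((0 : ℚ) - r.val) / m), Int.lt_floor_add_one (((0 : ℚ) - r.val) / m)]
  simpa using (Rat.cast_le (K := ℝ)).2 hrat

lemma tendsto_proportion_natCast_eq {m : ℕ} [NeZero m] (r : ZMod m) :
    Tendsto (fun n : ℕ ↦ proportion (Icc 1 n) fun x ↦ (x : ZMod m) = r) atTop (𝓝 (1 / m)) := by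
  refine tendsto_iff_norm_sub_tendsto_zero.2 <| squeeze_zero' (.of_forall fun _ ↦ norm_nonneg _) ?_
    tendsto_one_div_atTop_nhds_zero_nat
  filter_upwards [eventually_gt_atTop 0] with n hn
  have hn' : (0 : ℝ) < n := by exact_mod_cast hn
  have hdiv : (#{x ∈ Icc 1 n | ((x : ℕ) : ZMod m) = r} : ℝ) / n - 1 / m =
      (#{x ∈ Icc 1 n | ((x : ℕ) : ZMod m) = r} - n / m) / n := by field_simp
  rw [proportion_eq, Nat.card_Icc, Nat.add_sub_cancel, hdiv, Real.norm_eq_abs, abs_div,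
    abs_of_pos hn']
  gcongr
  exact abs_card_Icc_filter_natCast_eq_sub_le r n

lemma proportion_Icc_natCast_eq_zero_le (m n : ℕ) :
    proportion (Icc 1 n) (fun x ↦ (x : ZMod m) = 0) ≤ 1 / m := by
  simp only [ZMod.natCast_eq_zero_iff]
  rw [proportion_eq, show Icc 1 n = Ioc 0 n from rfl, Nat.Ioc_filter_dvd_card_eq_div, Nat.card_Ioc,
    Nat.sub_zero]
  exact div_le_of_le_mul₀ (by positivity) (by positivity)
    (Nat.cast_div_le.trans_eq (one_div_mul_eq_div _ _).symm)

variable [Fintype κ] {m : κ → ℕ} [∀ k, NeZero (m k)]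

lemma tendsto_proportion_forall_natCast_eq (hm : Pairwise (Function.onFun Nat.Coprime m))
    (r : ∀ k, ZMod (m k)) :
    Tendsto (fun n : ℕ ↦ proportion (Icc 1 n) fun x ↦ ∀ k, (x : ZMod (m k)) = r k) atTop
      (𝓝 (1 / ∏ k, (m k : ℝ))) := by
  have hcrt (x : ℕ) : (∀ k, (x : ZMod (m k)) = r k) ↔
      (x : ZMod (∏ k, m k)) = (ZMod.prodEquivPi m hm).symm r := by
    rw [(ZMod.prodEquivPi m hm).eq_symm_apply, map_natCast, funext_iff]
    simp only [Pi.natCast_apply]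
  have : NeZero (∏ k, m k) := ⟨prod_ne_zero_iff.2 fun k _ ↦ NeZero.ne _⟩
  simp only [hcrt, ← Nat.cast_prod]
  exact tendsto_proportion_natCast_eq _

theorem tendsto_proportion_forall_residues [Fintype ι] [DecidableEq ι]
    (hm : Pairwise (Function.onFun Nat.Coprime m)) (P : ∀ k, (ι → ZMod (m k)) → Prop) :
    Tendsto (fun n : ℕ ↦ proportion (Fintype.piFinset fun _ : ι ↦ Icc 1 n)
      fun x ↦ ∀ k, P k fun i ↦ (x i : ZMod (m k))) atTop (𝓝 (∏ k, proportion univ (P k))) := by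
  classical
  have hequi (r : ∀ k, ι → ZMod (m k)) :
      Tendsto (fun n : ℕ ↦ proportion (Fintype.piFinset fun _ : ι ↦ Icc 1 n)
        fun x ↦ (fun k i ↦ (x i : ZMod (m k))) = r) atTop
        (𝓝 (1 / Fintype.card (∀ k, ι → ZMod (m k)))) := by
    have hcoord (x : ι → ℕ) : (fun k i ↦ (x i : ZMod (m k))) = r ↔
        ∀ i k, (x i : ZMod (m k)) = r k i := by
      simp only [funext_iff]
      exact forall_comm
    have hcard : (1 / Fintype.card (∀ k, ι → ZMod (m k)) : ℝ) =
        ∏ _i : ι, 1 / ∏ k, (m k : ℝ) := by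
      simp [ZMod.card, prod_pow]
    simp only [hcoord, hcard, proportion_piFinset _ fun i (a : ℕ) ↦ ∀ k, (a : ZMod (m k)) = r k i]
    exact tendsto_finsetProd _ fun i _ ↦ tendsto_proportion_forall_natCast_eq hm _
  rw [← proportion_piFinset, Fintype.piFinset_univ]
  exact tendsto_proportion_comp hequi fun r ↦ ∀ k, P k (r k)

end Residues

section Graph

open Finset Topology

lemma isVertexCover_starGraph_iff {V : Type*} (c : V) (s : Set V) :
    (SimpleGraph.starGraph c).IsVertexCover s ↔ c ∈ s ∨ ∀ i ≠ c, i ∈ s := by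
  simp only [SimpleGraph.IsVertexCover, SimpleGraph.starGraph_adj]
  grind

variable {α ι : Type*} [Fintype ι] [DecidableEq ι]

lemma proportion_not_isVertexCover_le (G : SimpleGraph ι) (s : Finset α) (P : α → Prop) :
    proportion (Fintype.piFinset fun _ : ι ↦ s) (fun x ↦ ¬ G.IsVertexCover {i | ¬ P (x i)}) ≤
      Nat.card G.Dart * proportion s P ^ 2 := by
  classical
  have hdart (d : G.Dart) :
      proportion (Fintype.piFinset fun _ : ι ↦ s) (fun x ↦ ∀ i ∈ ({d.fst, d.snd} : Finset ι),
        P (x i)) ≤ proportion s P ^ 2 := by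
    obtain rfl | hs := s.eq_empty_or_nonempty
    · have : Nonempty ι := ⟨d.fst⟩
      simp [proportion]
    · rw [proportion_piFinset_forall_mem (fun _ ↦ hs) _ fun _ ↦ P, prod_pair d.adj.ne, sq]
  calc _ ≤ proportion (Fintype.piFinset fun _ : ι ↦ s)
        (fun x ↦ ∃ d : G.Dart, ∀ i ∈ ({d.fst, d.snd} : Finset ι), P (x i)) := by
        refine proportion_mono fun x hx ↦ ?_
        simp only [SimpleGraph.IsVertexCover, not_forall, Set.mem_ofPred_eq, not_or,
          not_not] at hx
        obtain ⟨i, j, hij, hi, hj⟩ := hx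
        exact ⟨⟨(i, j), hij⟩, by simp [hi, hj]⟩
    _ ≤ ∑' _ : G.Dart, proportion s P ^ 2 :=
        proportion_exists_le_tsum (Summable.of_finite) hdart
    _ = Nat.card G.Dart * proportion s P ^ 2 := by rw [tsum_const, nsmul_eq_mul]

lemma proportion_isVertexCover_starGraph (c : ι) {s : Finset α} (hs : s.Nonempty)
    (P : α → Prop) :
    proportion (Fintype.piFinset fun _ : ι ↦ s)
        (fun x ↦ (SimpleGraph.starGraph c).IsVertexCover {i | P (x i)}) =
      proportion s P + (1 - proportion s P) * proportion s P ^ (Fintype.card ι - 1) := by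
  have hcenter : proportion (Fintype.piFinset fun _ : ι ↦ s) (fun x ↦ P (x c)) =
      proportion s P := by
    simpa using proportion_piFinset_forall_mem (fun _ : ι ↦ hs) {c} fun _ ↦ P
  have hleaves : proportion (Fintype.piFinset fun _ : ι ↦ s)
      (fun x ↦ ∀ i, if i = c then ¬ P (x i) else P (x i)) =
      (1 - proportion s P) * proportion s P ^ (Fintype.card ι - 1) := by
    have hleaf : ∀ i ∈ univ.erase c,
        proportion s (fun a ↦ if i = c then ¬ P a else P a) = proportion s P := fun i hi ↦ by
      simp only [ne_of_mem_erase hi, if_false]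
    rw [proportion_piFinset (fun _ ↦ s) fun i a ↦ if i = c then ¬ P a else P a,
      ← mul_prod_erase univ _ (mem_univ c), prod_congr rfl hleaf, prod_const,
      card_erase_of_mem (mem_univ c), card_univ]
    simp only [if_true, proportion_not hs]
  calc _ = proportion (Fintype.piFinset fun _ : ι ↦ s)
        (fun x ↦ P (x c) ∨ ∀ i, if i = c then ¬ P (x i) else P (x i)) := by
        congr! 2 with x
        rw [isVertexCover_starGraph_iff]
        refine or_congr_right' fun hc ↦ forall_congr' fun i ↦ ?_
        rw [Set.mem_ofPred_eq] at hc
        grind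
    _ = _ := proportion_or_of_disjoint fun x hx hall ↦ by simpa [hx] using hall c
    _ = _ := by rw [hcenter, hleaves]

lemma proportion_residues_isVertexCover_starGraph (c : ι) (m : ℕ) [NeZero m] :
    proportion univ (fun r : ι → ZMod m ↦ (SimpleGraph.starGraph c).IsVertexCover {i | r i ≠ 0}) =
      1 - 1 / m + 1 / m * (1 - 1 / m : ℝ) ^ (Fintype.card ι - 1) := by
  rw [← Fintype.piFinset_univ,
    proportion_isVertexCover_starGraph c univ_nonempty fun a : ZMod m ↦ a ≠ 0,
    proportion_not univ_nonempty, proportion_univ_eq, ZMod.card, sub_sub_cancel]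

section Primes

local instance (p : Nat.Primes) : Fact (p : ℕ).Prime := ⟨p.2⟩

lemma forall_adj_coprime_iff_forall_prime_isVertexCover {V : Type*} (G : SimpleGraph V)
    (x : V → ℕ) :
    (∀ i j, G.Adj i j → (x i).Coprime (x j)) ↔
      ∀ p : Nat.Primes, G.IsVertexCover {i | (x i : ZMod p) ≠ 0} := by
  have hcoprime (a b : ℕ) :
      a.Coprime b ↔ ∀ p : Nat.Primes, (a : ZMod p) ≠ 0 ∨ (b : ZMod p) ≠ 0 := by
    rw [← not_iff_not, Nat.Prime.not_coprime_iff_dvd]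
    simp [ZMod.natCast_eq_zero_iff, Nat.Primes]
  simp only [hcoprime]
  exact ⟨fun h p i j hij ↦ h i j hij p, fun h i j hij p ↦ h p hij⟩

lemma summable_const_mul_one_div_primes_sq (c : ℝ) :
    Summable fun p : Nat.Primes ↦ c * (1 / (p : ℝ)) ^ 2 := by
  have h : Summable fun n : ℕ ↦ (1 / (n : ℝ)) ^ 2 := by simp
  exact (h.comp_injective Subtype.val_injective).mul_left c

lemma multipliable_proportion_isVertexCover (G : SimpleGraph ι) :
    Multipliable fun p : Nat.Primes ↦
      proportion univ fun r : ι → ZMod p ↦ G.IsVertexCover {i | r i ≠ 0} := by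
  have hfail (p : Nat.Primes) :
      proportion univ (fun r : ι → ZMod p ↦ ¬ G.IsVertexCover {i | r i ≠ 0}) ≤
        Nat.card G.Dart * (1 / (p : ℝ)) ^ 2 := by
    simpa only [Fintype.piFinset_univ, proportion_univ_eq, ZMod.card] using
      proportion_not_isVertexCover_le G univ fun a : ZMod p ↦ a = 0
  have hsum := (Summable.of_nonneg_of_le (fun p ↦ proportion_nonneg _ _) hfail
    (summable_const_mul_one_div_primes_sq _)).neg
  refine (Real.multipliable_one_add_of_summable hsum).congr fun p ↦ ?_
  rw [proportion_not univ_nonempty]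
  ring

theorem density_pairwise_coprime_triples_general (G : SimpleGraph ι) :
    Tendsto
      (fun n : ℕ ↦ proportion (Fintype.piFinset fun _ : ι ↦ Icc 1 n)
        fun x ↦ ∀ i j, G.Adj i j → (x i).Coprime (x j))
      atTop
      (𝓝 (∏' p : Nat.Primes,
        proportion univ fun r : ι → ZMod p ↦ G.IsVertexCover {i | r i ≠ 0})) := by
  simp only [forall_adj_coprime_iff_forall_prime_isVertexCover]
  refine tendsto_proportion_forall (fun S ↦ ?_)
    (summable_const_mul_one_div_primes_sq (Nat.card G.Dart)) (fun n p ↦ ?_)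
    (multipliable_proportion_isVertexCover G).hasProd
  · have hcoprime : Pairwise (Function.onFun Nat.Coprime fun p : S ↦ ((p : Nat.Primes) : ℕ)) :=
      fun p q hpq ↦ (Nat.coprime_primes p.1.2 q.1.2).2 fun h ↦ hpq (Subtype.ext (Subtype.ext h))
    rw [← prod_coe_sort]
    simpa only [Subtype.forall] using tendsto_proportion_forall_residues hcoprime
      fun p r ↦ G.IsVertexCover {i : ι | r i ≠ 0}
  · refine (proportion_not_isVertexCover_le G _ fun a : ℕ ↦ (a : ZMod p) = 0).trans ?_
    gcongr
    · exact proportion_nonneg _ _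
    · exact proportion_Icc_natCast_eq_zero_le p n

lemma proportion_residues_isVertexCover_starGraph_fin_three (p : Nat.Primes) :
    proportion univ (fun r : Fin 3 → ZMod p ↦
        (SimpleGraph.starGraph (0 : Fin 3)).IsVertexCover {i | r i ≠ 0}) =
      1 - 2 / (p : ℝ) ^ 2 + 1 / (p : ℝ) ^ 3 := by
  rw [proportion_residues_isVertexCover_starGraph, Fintype.card_fin]
  ring

end Primes

lemma proportion_coprime_starGraph_fin_three (n : ℕ) :
    proportion (Fintype.piFinset fun _ : Fin 3 ↦ Icc 1 n)
        (fun x ↦ ∀ i j, (SimpleGraph.starGraph 0).Adj i j → (x i).Coprime (x j)) =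
      #{t ∈ Icc 1 n ×ˢ Icc 1 n ×ˢ Icc 1 n | Nat.gcd t.1 t.2.1 = 1 ∧ Nat.gcd t.1 t.2.2 = 1} /
        (n : ℝ) ^ 3 := by
  classical
  have hstar (x : Fin 3 → ℕ) :
      (∀ i j, (SimpleGraph.starGraph 0).Adj i j → (x i).Coprime (x j)) ↔
        Nat.gcd (x 0) (x 1) = 1 ∧ Nat.gcd (x 0) (x 2) = 1 := by
    simp only [← Nat.coprime_iff_gcd_eq_one, SimpleGraph.starGraph_adj]
    simp [Fin.forall_fin_succ, Nat.coprime_comm (m := x 0)]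
  simp only [hstar]
  rw [proportion_eq]
  congr 1
  · norm_cast
    refine card_nbij' (fun x ↦ (x 0, x 1, x 2)) (fun t ↦ ![t.1, t.2.1, t.2.2]) ?_ ?_ ?_ ?_
    · intro x hx
      simpa [Fin.forall_fin_succ] using hx
    · intro t ht
      simpa [Fin.forall_fin_succ] using ht
    · intro x _
      ext i
      fin_cases i <;> rfl
    · intro t _
      rfl
  · simp

end Graph

/-- The density of triples `(a,b,c) ∈ {1,…,n}³` with
`gcd(a,b) = 1` and `gcd(a,c) = 1` converges to `∏_p (1 − 2/p² + 1/p³)`. -/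
theorem density_pairwise_coprime_triples :
    Tendsto
      (fun n : ℕ =>
        ((((Finset.Icc 1 n) ×ˢ (Finset.Icc 1 n) ×ˢ (Finset.Icc 1 n)).filter
            (fun t : ℕ × ℕ × ℕ =>
              Nat.gcd t.1 t.2.1 = 1 ∧ Nat.gcd t.1 t.2.2 = 1)).card : ℝ) / (n : ℝ) ^ 3)
      atTop
      (nhds (∏' p : Nat.Primes, (1 - 2 / (p : ℝ) ^ 2 + 1 / (p : ℝ) ^ 3))) := by
  simpa only [proportion_residues_isVertexCover_starGraph_fin_three,
    proportion_coprime_starGraph_fin_three] using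
    density_pairwise_coprime_triples_general (SimpleGraph.starGraph (0 : Fin 3))
end
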